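/- For every open bounded convex set Ω ⊂ ℝ^N and every open ball B ⊂ ℝ^N one has the strict inequality μ_p(Ω) < λ_p(B) · (|B|/|Ω|)^{p/N}. -/

import Mathlib

open MeasureTheory Metric Set Real

noncomputable section

/-- The Rayleigh quotient `(∫_Ω |∇v|^p) / (∫_Ω |v|^q)^(p/q)`, where the gradient is
understood as the (a.e. defined) Fréchet derivative. -/
def rayleighQuot {N : ℕ} (p q : ℝ) (Ω : Set (EuclideanSpace ℝ (Fin N)))
    (v : EuclideanSpace ℝ (Fin N) → ℝ) : ℝ :=
  (∫ x in Ω, ‖fderiv ℝ v x‖ ^ p) / (∫ x in Ω, |v x| ^ q) ^ (p / q)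

/-- The first (generalized) Dirichlet eigenvalue `λ_{p,q}(Ω)`: infimum of the Rayleigh
quotient over nontrivial smooth functions compactly supported in `Ω`. -/
def lambdaPQ {N : ℕ} (p q : ℝ) (Ω : Set (EuclideanSpace ℝ (Fin N))) : ℝ :=
  sInf { R : ℝ | ∃ v : EuclideanSpace ℝ (Fin N) → ℝ,
    ContDiff ℝ (⊤ : ℕ∞) v ∧ HasCompactSupport v ∧ tsupport v ⊆ Ω ∧
    (∃ x ∈ Ω, v x ≠ 0) ∧ R = rayleighQuot p q Ω v }

/-- The first nontrivial (generalized) Neumann eigenvalue `μ_{p,q}(Ω)`: infimum of the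
Rayleigh quotient over nontrivial Lipschitz functions on the closure of `Ω` satisfying
the constraint `∫_Ω |v|^(q-2) v = 0`. -/
def muPQ {N : ℕ} (p q : ℝ) (Ω : Set (EuclideanSpace ℝ (Fin N))) : ℝ :=
  sInf { R : ℝ | ∃ v : EuclideanSpace ℝ (Fin N) → ℝ, ∃ K : NNReal,
    LipschitzOnWith K v (closure Ω) ∧ (∃ x ∈ Ω, v x ≠ 0) ∧
    (∫ x in Ω, |v x| ^ (q - 2) * v x) = 0 ∧ R = rayleighQuot p q Ω v }

/-- `q` is below the critical Sobolev exponent `p* = Np/(N-p)` (with `p* = ∞` if `p ≥ N`). -/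
def ltCritical (N : ℕ) (p q : ℝ) : Prop := p < N → q < N * p / (N - p)

end

/-!
Let `a, b` be the endpoints of a diameter of `Ω`, let `2R` be its length, and let `φ(|x|)` be a
nearly optimal radially decreasing function for the Dirichlet problem on a ball of radius `R`. Its
`p`-energy is at most `Λ ≈ λ_p(B_R)` times its `p`-mass even on every ball centred at the origin,
hence, ray by ray, on every set that is star-shaped about the origin. So the translates
`φ(|x - a|)` and `φ(|x - b|)` have Rayleigh quotient at most `Λ` on the convex set `Ω`; they have
disjoint supports, and a linear combination of them is admissible for the Neumann problem. This
gives `μ_p(Ω) ≤ λ_p(B_R)`.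

For strictness, replace `|x - a|` by `ψ(x) = (|x - a| + ⟨e, x - a⟩) / 2`, with `e` the direction of
the diameter pointing into `Ω`. Since `⟨e, x - a⟩ ≤ ψ(x)`, the supports are still separated by the
hyperplane bisecting the diameter. On a ray from `a` making the angle `α` with `e`, the function `ψ`
is `cos² (α / 2)` times the distance to `a` while `|∇ψ| = cos (α / 2)`, so the energy gains the
factor `cos^p (α / 2)`. As `Ω` is open, it contains a cone of rays on which this factor stays away
from `1`, and the total gain is some `κ < 1` independent of `φ`.

Finally, the scaling of `λ_p(B_R)` in `R` and the isodiametric inequality `|Ω| ≤ |B_R|` turn the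
bound in terms of the diameter into one in terms of the volume.
-/

section Isodiametric

open scoped ENNReal
open Function (update)

lemma volume_setOf_ofReal_two_mul_abs_lt (L : ℝ≥0∞) :
    volume {t : ℝ | ENNReal.ofReal (2 * |t|) < L} = L := by
  rcases eq_or_ne L ⊤ with rfl | hL
  · simp only [ENNReal.ofReal_lt_top, ofPred_true, measure_univ_of_isAddLeftInvariant]
  have h : {t : ℝ | ENNReal.ofReal (2 * |t|) < L} = Ioo (-(L.toReal / 2)) (L.toReal / 2) := by
    ext t
    rw [mem_ofPred_eq, ENNReal.ofReal_lt_iff_lt_toReal (by positivity) hL, mem_Ioo, ← abs_lt,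
      lt_div_iff₀' two_pos]
  rw [h, Real.volume_Ioo, sub_neg_eq_add, add_halves, ENNReal.ofReal_toReal hL]

lemma exists_add_le_abs_sub_of_lt_volume {P Q : Set ℝ} {a b : ℝ} (ha : 0 ≤ a) (hb : 0 ≤ b)
    (hP : ENNReal.ofReal (2 * a) < volume P) (hQ : ENNReal.ofReal (2 * b) < volume Q) :
    ∃ t ∈ P, ∃ s ∈ Q, a + b ≤ |t - s| := by
  by_contra! hc
  have nonempty_of_lt : ∀ {S : Set ℝ} {c : ℝ≥0∞}, c < volume S → S.Nonempty := fun h =>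
    nonempty_of_measure_ne_zero h.ne_bot
  obtain ⟨t₀, ht₀⟩ := nonempty_of_lt hP
  obtain ⟨s₀, hs₀⟩ := nonempty_of_lt hQ
  have length_lt : ∀ {S : Set ℝ} {l u c : ℝ}, 0 ≤ c → ENNReal.ofReal (2 * c) < volume S →
      S ⊆ Icc l u → 2 * c < u - l := fun hc h hS =>
    (ENNReal.ofReal_lt_ofReal_iff_of_nonneg (by positivity)).1
      (h.trans_le ((measure_mono hS).trans_eq Real.volume_Icc))
  have ordered : ∀ t ∈ P, ∀ s ∈ Q, t - (a + b) ≤ s ∧ s - (a + b) ≤ t := fun t ht s hs => by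
    have := abs_lt.1 (hc t ht s hs)
    constructor <;> linarith
  have hPb : BddBelow P := ⟨s₀ - (a + b), fun t ht => (ordered t ht s₀ hs₀).2⟩
  have hQb : BddBelow Q := ⟨t₀ - (a + b), fun s hs => (ordered t₀ ht₀ s hs).1⟩
  have hPu : P ⊆ Icc (sInf P) (sInf Q + (a + b)) := fun t ht =>
    ⟨csInf_le hPb ht, sub_le_iff_le_add.1 (le_csInf ⟨s₀, hs₀⟩ fun s hs => (ordered t ht s hs).1)⟩
  have hQu : Q ⊆ Icc (sInf Q) (sInf P + (a + b)) := fun s hs =>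
    ⟨csInf_le hQb hs, sub_le_iff_le_add.1 (le_csInf ⟨t₀, ht₀⟩ fun t ht => (ordered t ht s hs).2)⟩
  linarith [length_lt ha hP hPu, length_lt hb hQ hQu]

variable {ι : Type*} [DecidableEq ι]

/-- The Steiner symmetrization of `A` along the `i`-th coordinate: the line through `x` parallel
to the `i`-th axis meets it in the open segment, centred on `{x | x i = 0}`, having the same length
as the intersection of that line with `A`. -/
def steinerSymm (i : ι) (A : Set (ι → ℝ)) : Set (ι → ℝ) :=
  {x | ENNReal.ofReal (2 * |x i|) < volume {t : ℝ | update x i t ∈ A}}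

lemma update_neg_mem_steinerSymm_self (i : ι) (A : Set (ι → ℝ)) {x : ι → ℝ}
    (hx : x ∈ steinerSymm i A) : update x i (-x i) ∈ steinerSymm i A := by
  simpa [steinerSymm] using hx

lemma update_neg_mem_steinerSymm {i j : ι} (hij : i ≠ j) {A : Set (ι → ℝ)}
    (h : ∀ x ∈ A, update x j (-x j) ∈ A) {x : ι → ℝ} (hx : x ∈ steinerSymm i A) :
    update x j (-x j) ∈ steinerSymm i A := by
  rw [steinerSymm, mem_ofPred_eq, Function.update_of_ne hij]
  refine hx.trans_le (measure_mono fun t ht => ?_)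
  simpa [Function.update_of_ne hij.symm, Function.update_comm hij] using h _ ht

lemma lmarginal_singleton_indicator_one (i : ι) {A : Set (ι → ℝ)} (hA : MeasurableSet A) :
    (∫⋯∫⁻_{i}, A.indicator 1 ∂fun _ => (volume : Measure ℝ)) =
      fun x => volume {t : ℝ | update x i t ∈ A} := by
  rw [lmarginal_singleton]
  funext x
  exact lintegral_indicator_one (hA.preimage (measurable_update x))

lemma measurableSet_steinerSymm (i : ι) {A : Set (ι → ℝ)} (hA : MeasurableSet A) :
    MeasurableSet (steinerSymm i A) := by
  refine measurableSet_lt (by fun_prop) ?_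
  rw [← lmarginal_singleton_indicator_one i hA]
  exact (measurable_one.indicator hA).lmarginal _

lemma neg_mem_of_reflection_invariant [Finite ι] {B : Set (ι → ℝ)}
    (h : ∀ i, ∀ x ∈ B, update x i (-x i) ∈ B) {x : ι → ℝ} (hx : x ∈ B) : -x ∈ B := by
  have := Fintype.ofFinite ι
  have piecewise_mem : ∀ s : Finset ι, s.piecewise (-x) x ∈ B := fun s => by
    induction s using Finset.induction_on with
    | empty => simpa using hx
    | insert i s hi ih => simpa [Finset.piecewise_insert, hi] using h i _ ih
  simpa using piecewise_mem Finset.univ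

variable [Fintype ι]

lemma sum_sq_sub_le_of_mem_steinerSymm (i : ι) {A : Set (ι → ℝ)} {D : ℝ}
    (h : ∀ x ∈ A, ∀ y ∈ A, ∑ j, (x j - y j) ^ 2 ≤ D) {x y : ι → ℝ}
    (hx : x ∈ steinerSymm i A) (hy : y ∈ steinerSymm i A) : ∑ j, (x j - y j) ^ 2 ≤ D := by
  obtain ⟨t, ht, s, hs, hts⟩ :=
    exists_add_le_abs_sub_of_lt_volume (abs_nonneg (x i)) (abs_nonneg (y i)) hx hy
  refine le_trans (Finset.sum_le_sum fun j _ => ?_) (h _ ht _ hs)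
  rcases eq_or_ne j i with rfl | hj
  · simpa using sq_le_sq.2 ((abs_sub _ _).trans hts)
  · simp [Function.update_of_ne hj]

lemma volume_steinerSymm (i : ι) {A : Set (ι → ℝ)} (hA : MeasurableSet A) :
    volume (steinerSymm i A) = volume A := by
  have hS := measurableSet_steinerSymm i hA
  rw [← lintegral_indicator_one hS, ← lintegral_indicator_one hA]
  refine lintegral_eq_of_lmarginal_eq {i} (measurable_one.indicator hS)
    (measurable_one.indicator hA) ?_
  rw [lmarginal_singleton_indicator_one i hS, lmarginal_singleton_indicator_one i hA]
  funext x
  simpa [steinerSymm] using volume_setOf_ofReal_two_mul_abs_lt _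

lemma exists_reflection_invariant (s : Finset ι) {A : Set (ι → ℝ)} {D : ℝ} (hA : MeasurableSet A)
    (hD : ∀ x ∈ A, ∀ y ∈ A, ∑ j, (x j - y j) ^ 2 ≤ D) :
    ∃ B : Set (ι → ℝ), MeasurableSet B ∧ volume B = volume A ∧
      (∀ x ∈ B, ∀ y ∈ B, ∑ j, (x j - y j) ^ 2 ≤ D) ∧
      ∀ i ∈ s, ∀ x ∈ B, update x i (-x i) ∈ B := by
  induction s using Finset.induction_on with
  | empty => exact ⟨A, hA, rfl, hD, by simp⟩
  | insert i s _ ih =>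
    obtain ⟨B, hB, hvol, hdist, hrefl⟩ := ih
    refine ⟨steinerSymm i B, measurableSet_steinerSymm i hB, (volume_steinerSymm i hB).trans hvol,
      fun x hx y hy => sum_sq_sub_le_of_mem_steinerSymm i hdist hx hy, fun j hj x hx => ?_⟩
    rcases eq_or_ne i j with rfl | hij
    · exact update_neg_mem_steinerSymm_self i B hx
    · exact update_neg_mem_steinerSymm hij (hrefl j (Finset.mem_of_mem_insert_of_ne hj hij.symm)) hx

end Isodiametric

lemma volume_le_of_sum_sq_sub_le {ι : Type*} [Fintype ι] {A : Set (ι → ℝ)}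
    (hA : MeasurableSet A) {ρ : ℝ}
    (h : ∀ x ∈ A, ∀ y ∈ A, ∑ j, (x j - y j) ^ 2 ≤ (2 * ρ) ^ 2) :
    volume A ≤ volume {x : ι → ℝ | ∑ j, x j ^ 2 ≤ ρ ^ 2} := by
  classical
  obtain ⟨B, -, hvol, hdist, hrefl⟩ := exists_reflection_invariant Finset.univ hA h
  rw [← hvol]
  refine measure_mono fun x hx => ?_
  have hneg := hdist x hx (-x)
    (neg_mem_of_reflection_invariant (fun i => hrefl i (Finset.mem_univ i)) hx)
  have hsum : ∑ j, (x j - (-x) j) ^ 2 = 2 ^ 2 * ∑ j, x j ^ 2 := by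
    rw [Finset.mul_sum]
    exact Finset.sum_congr rfl fun j _ => by rw [Pi.neg_apply]; ring
  rw [hsum, mul_pow] at hneg
  exact le_of_mul_le_mul_left hneg (by norm_num)

theorem volume_le_volume_closedBall_diam_div_two {ι : Type*} [Fintype ι]
    {A : Set (EuclideanSpace ℝ ι)} (hA : Bornology.IsBounded A) (c : EuclideanSpace ℝ ι) :
    volume A ≤ volume (closedBall c (diam A / 2)) := by
  have mp := PiLp.volume_preserving_toLp ι
  rw [Measure.addHaar_closedBall_center]
  calc volume A ≤ volume (closure A) := measure_mono subset_closure
    _ = volume (WithLp.toLp 2 ⁻¹' closure A) :=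
      (mp.measure_preimage isClosed_closure.measurableSet.nullMeasurableSet).symm
    _ ≤ volume {x : ι → ℝ | ∑ j, x j ^ 2 ≤ (diam A / 2) ^ 2} :=
      volume_le_of_sum_sq_sub_le (mp.measurable isClosed_closure.measurableSet)
        fun x hx y hy => ?_
    _ = volume (WithLp.toLp 2 ⁻¹' closedBall (0 : EuclideanSpace ℝ ι) (diam A / 2)) := by
      rw [EuclideanSpace.closedBall_zero_eq _ (by positivity)]
      rfl
    _ = volume (closedBall (0 : EuclideanSpace ℝ ι) (diam A / 2)) :=
      mp.measure_preimage isClosed_closedBall.measurableSet.nullMeasurableSet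
  have hdist := dist_le_diam_of_mem hA.closure hx hy
  rw [diam_closure, EuclideanSpace.dist_eq] at hdist
  rw [mul_div_cancel₀ _ two_ne_zero]
  simpa [Real.dist_eq, sq_abs] using (Real.sqrt_le_left diam_nonneg).1 hdist

section PolarCoordinates

open scoped ENNReal
open Module (finrank)

/-- The measure `tⁿ dt` on the positive half-line, viewed as a measure on `ℝ`: the radial part of
the volume in dimension `n + 1`. Mathlib's `Measure.volumeIoiPow n` lives on the subtype `Ioi 0`,
where integrands cannot be rescaled or restricted as freely. -/
noncomputable def radialMeasure (n : ℕ) : Measure ℝ :=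
  (volume.restrict (Ioi 0)).withDensity fun t => ENNReal.ofReal (t ^ n)

instance (n : ℕ) : SFinite (radialMeasure n) := by
  unfold radialMeasure
  infer_instance

lemma lintegral_radialMeasure (n : ℕ) (f : ℝ → ℝ≥0∞) :
    ∫⁻ t, f t ∂radialMeasure n = ∫⁻ t in Ioi 0, ENNReal.ofReal (t ^ n) * f t :=
  lintegral_withDensity_eq_lintegral_mul_non_measurable _ (by fun_prop)
    (ae_of_all _ fun _ => ENNReal.ofReal_lt_top) f

lemma ae_radialMeasure_of_ae {n : ℕ} {P : ℝ → Prop} (h : ∀ᵐ t, P t) :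
    ∀ᵐ t ∂radialMeasure n, P t :=
  (withDensity_absolutelyContinuous _ _).ae_le (ae_restrict_of_ae h)

lemma ae_radialMeasure_pos (n : ℕ) : ∀ᵐ t ∂radialMeasure n, 0 < t :=
  (withDensity_absolutelyContinuous _ _).ae_le (ae_restrict_mem measurableSet_Ioi)

lemma lintegral_comp_subtype_val_volumeIoiPow (n : ℕ) {f : ℝ → ℝ≥0∞} (hf : Measurable f) :
    ∫⁻ t : Ioi (0 : ℝ), f t ∂Measure.volumeIoiPow n = ∫⁻ t, f t ∂radialMeasure n := by
  rw [lintegral_radialMeasure, Measure.volumeIoiPow,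
    lintegral_withDensity_eq_lintegral_mul _ (by fun_prop) (by fun_prop),
    ← lintegral_subtype_comap measurableSet_Ioi]
  rfl

lemma lintegral_radialMeasure_comp_mul (n : ℕ) {b : ℝ} (hb : 0 < b) (f : ℝ → ℝ≥0∞) :
    ∫⁻ t, f t ∂radialMeasure n =
      ENNReal.ofReal (b ^ (n + 1)) * ∫⁻ t, f (b * t) ∂radialMeasure n := by
  let g : ℝ → ℝ≥0∞ := (Ioi 0).indicator fun t => ENNReal.ofReal (t ^ n) * f t
  have hg : ∀ t, g (b * t) = ENNReal.ofReal (b ^ n) *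
      (Ioi 0).indicator (fun t => ENNReal.ofReal (t ^ n) * f (b * t)) t := fun t => by
    simp only [g, indicator, mem_Ioi, mul_pos_iff_of_pos_left hb, mul_pow,
      ENNReal.ofReal_mul (pow_nonneg hb.le n), mul_assoc, mul_ite, mul_zero]
  simp only [lintegral_radialMeasure, ← lintegral_indicator measurableSet_Ioi]
  calc ∫⁻ t, g t = ENNReal.ofReal b * ∫⁻ t, g (b * t) := by
        conv_lhs => rw [← Real.smul_map_volume_mul_left hb.ne']
        rw [lintegral_smul_measure, (measurableEmbedding_mulLeft₀ hb.ne').lintegral_map,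
          abs_of_pos hb, smul_eq_mul]
    _ = _ := by
        simp only [hg]
        rw [lintegral_const_mul' _ _ ENNReal.ofReal_ne_top, ← mul_assoc,
          ← ENNReal.ofReal_mul hb.le, pow_succ']

lemma setLIntegral_Iio_radialMeasure_comp_mul (n : ℕ) {b : ℝ} (hb : 0 < b) (f : ℝ → ℝ≥0∞) (s : ℝ) :
    ∫⁻ t in Iio (b * s), f t ∂radialMeasure n =
      ENNReal.ofReal (b ^ (n + 1)) * ∫⁻ t in Iio s, f (b * t) ∂radialMeasure n := by
  rw [← lintegral_indicator measurableSet_Iio, ← lintegral_indicator measurableSet_Iio,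
    lintegral_radialMeasure_comp_mul n hb]
  congr 2 with t
  simp only [indicator, mem_Iio, mul_lt_mul_iff_right₀ hb]

lemma setLIntegral_Ioo_radialMeasure_ofReal (n : ℕ) {g : ℝ → ℝ} (hg : Continuous g)
    (hg₀ : ∀ t, 0 ≤ g t) {a b : ℝ} (ha : 0 ≤ a) (hab : a ≤ b) :
    ∫⁻ t in Ioo a b, ENNReal.ofReal (g t) ∂radialMeasure n =
      ENNReal.ofReal (∫ t in a..b, t ^ n * g t) := by
  have hsub : Ioo a b ⊆ Ioi 0 := fun t ht => ha.trans_lt ht.1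
  rw [radialMeasure, restrict_withDensity measurableSet_Ioo,
    lintegral_withDensity_eq_lintegral_mul _ (by fun_prop) (by fun_prop),
    Measure.restrict_restrict measurableSet_Ioo,
    inter_eq_self_of_subset_left hsub, restrict_Ioo_eq_restrict_Ioc,
    intervalIntegral.integral_of_le hab, ofReal_integral_eq_lintegral_ofReal]
  · refine setLIntegral_congr_fun measurableSet_Ioc fun t ht => ?_
    exact (ENNReal.ofReal_mul (pow_nonneg (ha.trans ht.1.le) n)).symm
  · exact ((by fun_prop : Continuous fun t => t ^ n * g t).intervalIntegrable a b).1
  · filter_upwards [ae_restrict_mem measurableSet_Ioc] with t ht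
    exact mul_nonneg (pow_nonneg (ha.trans ht.1.le) n) (hg₀ t)

lemma lintegral_radialMeasure_eq_setLIntegral_Ioo (n : ℕ) {f : ℝ → ℝ≥0∞} {R : ℝ}
    (h : ∀ t, R ≤ t → f t = 0) :
    ∫⁻ t, f t ∂radialMeasure n = ∫⁻ t in Ioo 0 R, f t ∂radialMeasure n := by
  rw [← lintegral_indicator measurableSet_Ioo]
  refine lintegral_congr_ae ?_
  filter_upwards [ae_radialMeasure_pos n] with t ht
  by_cases htR : t < R
  · rw [indicator_of_mem (mem_Ioo.2 ⟨ht, htR⟩)]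
  · rw [indicator_of_notMem fun h' => htR h'.2, h t (not_lt.1 htR)]

variable {E : Type*} [NormedAddCommGroup E] [NormedSpace ℝ E] [FiniteDimensional ℝ E]
  [MeasurableSpace E] [BorelSpace E]

lemma lintegral_eq_lintegral_sphere_radialMeasure [Nontrivial E] (μ : Measure E)
    [μ.IsAddHaarMeasure] (a : E) {f : E → ℝ≥0∞} (hf : Measurable f) :
    ∫⁻ x, f x ∂μ = ∫⁻ θ : sphere (0 : E) 1,
      ∫⁻ t, f (a + t • (θ : E)) ∂radialMeasure (finrank ℝ E - 1) ∂μ.toSphere := by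
  have mp := μ.measurePreserving_homeomorphUnitSphereProd
  calc ∫⁻ x, f x ∂μ = ∫⁻ x, f (a + x) ∂μ := (lintegral_add_left_eq_self f a).symm
    _ = ∫⁻ x : ({0}ᶜ : Set E), f (a + x) ∂μ.comap (↑) := by
      rw [lintegral_subtype_comap (measurableSet_singleton _).compl (fun x => f (a + x)),
        restrict_compl_singleton]
    _ = ∫⁻ z : sphere (0 : E) 1 × Ioi (0 : ℝ), f (a + z.2.1 • z.1.1)
        ∂(μ.toSphere.prod (Measure.volumeIoiPow (finrank ℝ E - 1))) := by
      rw [← mp.lintegral_comp_emb (Homeomorph.measurableEmbedding _)]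
      congr 1 with x
      simp [smul_smul, mul_inv_cancel₀ (norm_ne_zero_iff.2 x.2)]
    _ = ∫⁻ θ : sphere (0 : E) 1, ∫⁻ t : Ioi (0 : ℝ), f (a + t.1 • θ.1)
        ∂Measure.volumeIoiPow (finrank ℝ E - 1) ∂μ.toSphere :=
      lintegral_prod _ (by fun_prop)
    _ = _ := lintegral_congr fun θ =>
      lintegral_comp_subtype_val_volumeIoiPow _ (f := fun t => f (a + t • θ.1)) (by fun_prop)

end PolarCoordinates

section RadialProfile

open scoped ENNReal NNReal Topology

/-- A decreasing function `φ` of one variable supported in `(-∞, r)` which, as a radial function in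
dimension `n + 1`, has `p`-energy at most `Λ` times its `p`-mass, not only globally but on every
ball centred at the origin. Such profiles replace the radially decreasing first eigenfunction of a
ball of radius `r`, whose existence is not needed. -/
structure RadialProfile (n : ℕ) (p r Λ : ℝ) (φ : ℝ → ℝ) : Prop where
  antitone : Antitone φ
  exists_lipschitz : ∃ K, LipschitzWith K φ
  tsupport_subset : tsupport φ ⊆ Iio r
  pos_zero : 0 < φ 0
  lintegral_deriv_le : ∀ s, ∫⁻ t in Iio s, ENNReal.ofReal (|deriv φ t| ^ p) ∂radialMeasure n ≤
    ENNReal.ofReal Λ * ∫⁻ t in Iio s, ENNReal.ofReal (φ t ^ p) ∂radialMeasure n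

namespace RadialProfile

variable {n : ℕ} {p r Λ : ℝ} {φ : ℝ → ℝ}

lemma continuous (h : RadialProfile n p r Λ φ) : Continuous φ :=
  let ⟨_, hK⟩ := h.exists_lipschitz
  hK.continuous

lemma eq_zero_of_le (h : RadialProfile n p r Λ φ) {t : ℝ} (ht : r ≤ t) : φ t = 0 :=
  image_eq_zero_of_notMem_tsupport fun h' => ht.not_gt (h.tsupport_subset h')

lemma nonneg (h : RadialProfile n p r Λ φ) (t : ℝ) : 0 ≤ φ t :=
  (h.eq_zero_of_le (le_max_left r t)).symm.trans_le (h.antitone (le_max_right r t))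

lemma lintegral_deriv_comp_mul_le (h : RadialProfile n p r Λ φ) {b : ℝ} (hb : 0 < b) (s : ℝ) :
    ∫⁻ t in Iio s, ENNReal.ofReal (|deriv φ (b * t)| ^ p) ∂radialMeasure n ≤
      ENNReal.ofReal Λ * ∫⁻ t in Iio s, ENNReal.ofReal (φ (b * t) ^ p) ∂radialMeasure n := by
  have hle := h.lintegral_deriv_le (b * s)
  rw [setLIntegral_Iio_radialMeasure_comp_mul n hb,
    setLIntegral_Iio_radialMeasure_comp_mul n hb, mul_left_comm] at hle
  exact (ENNReal.mul_le_mul_iff_right (ENNReal.ofReal_pos.2 (by positivity)).ne'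
    ENNReal.ofReal_ne_top).1 hle

lemma comp_mul (h : RadialProfile n p r Λ φ) {b : ℝ} (hb : 0 < b) :
    RadialProfile n p (r / b) (b ^ p * Λ) fun t => φ (b * t) where
  antitone := h.antitone.comp_monotone (monotone_mul_left_of_nonneg hb.le)
  exists_lipschitz := by
    obtain ⟨K, hK⟩ := h.exists_lipschitz
    exact ⟨_, hK.comp (lipschitzWith_smul b)⟩
  tsupport_subset := fun t ht => (lt_div_iff₀' hb).2 <|
    h.tsupport_subset (tsupport_comp_subset_preimage φ (continuous_const_mul b) ht)
  pos_zero := by simpa using h.pos_zero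
  lintegral_deriv_le s := by
    have hbp : 0 ≤ b ^ p := by positivity
    simp only [deriv_comp_mul_left, smul_eq_mul, abs_mul, abs_of_pos hb,
      mul_rpow hb.le (abs_nonneg _), ENNReal.ofReal_mul hbp, mul_assoc]
    rw [lintegral_const_mul' _ _ ENNReal.ofReal_ne_top]
    gcongr
    exact h.lintegral_deriv_comp_mul_le hb s

lemma setLIntegral_comp_div_two_le (h : RadialProfile n p r Λ φ) (hp : 0 ≤ p) {b : ℝ} (hb : 2 ≤ b)
    (s : ℝ) :
    ∫⁻ t in Iio (b * s), ENNReal.ofReal (φ (t / 2) ^ p) ∂radialMeasure n ≤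
      ENNReal.ofReal (b ^ (n + 1)) *
        ∫⁻ t in Iio s, ENNReal.ofReal (φ t ^ p) ∂radialMeasure n := by
  rw [setLIntegral_Iio_radialMeasure_comp_mul n (two_pos.trans_le hb)]
  refine mul_le_mul' le_rfl (lintegral_mono_ae ?_)
  filter_upwards [ae_restrict_of_ae (ae_radialMeasure_pos n)] with t ht
  exact ENNReal.ofReal_le_ofReal
    (rpow_le_rpow (h.nonneg _) (h.antitone (by nlinarith)) hp)

end RadialProfile

lemma exists_forall_integral_nonneg {g : ℝ → ℝ} (hg : Continuous g) {R : ℝ} (hR : 0 ≤ R)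
    (hpos : 0 < ∫ t in (0)..R, g t) (hge : ∀ t, R ≤ t → 0 ≤ g t) :
    ∃ σ ∈ Icc 0 R, 0 < (∫ t in σ..R, g t) ∧ ∀ s, σ ≤ s → 0 ≤ ∫ t in σ..s, g t := by
  have hcont : Continuous fun s => ∫ t in (0)..s, g t :=
    intervalIntegral.continuous_primitive (fun a b => hg.intervalIntegrable a b) 0
  obtain ⟨σ, hσ, hmin⟩ := isCompact_Icc.exists_isMinOn (nonempty_Icc.2 hR) hcont.continuousOn
  have hdiff : ∀ s, ∫ t in σ..s, g t = (∫ t in (0)..s, g t) - ∫ t in (0)..σ, g t := fun s =>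
    (intervalIntegral.integral_interval_sub_left (hg.intervalIntegrable _ _)
      (hg.intervalIntegrable _ _)).symm
  have hσR : 0 < ∫ t in σ..R, g t := by
    have hσ0 := hmin (left_mem_Icc.2 hR)
    simp only [mem_ofPred_eq, intervalIntegral.integral_same] at hσ0
    linarith [hdiff R]
  refine ⟨σ, hσ, hσR, fun s hs => ?_⟩
  rcases le_total s R with hsR | hsR
  · rw [hdiff, sub_nonneg]
    exact hmin ⟨hσ.1.trans hs, hsR⟩
  · rw [← intervalIntegral.integral_add_adjacent_intervals (hg.intervalIntegrable σ R)
      (hg.intervalIntegrable R s)]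
    exact add_nonneg hσR.le (intervalIntegral.integral_nonneg hsR fun t ht => hge t ht.1)

/-- The total variation of a `C¹` function `f` on `[t, R]`, as a function of `t`: a decreasing
function which dominates `|f|` when `f R = 0`, with the same size of derivative as `f`. -/
noncomputable def tailVariation (f : ℝ → ℝ) (R t : ℝ) : ℝ := ∫ s in t..R, |deriv f s|

section TailVariation

variable {f : ℝ → ℝ} {R : ℝ}

lemma hasDerivAt_tailVariation (hf : ContDiff ℝ 1 f) (t : ℝ) :
    HasDerivAt (tailVariation f R) (-|deriv f t|) t := by
  have hc : Continuous fun s => |deriv f s| := hf.continuous_deriv_one.abs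
  exact intervalIntegral.integral_hasDerivAt_left (hc.intervalIntegrable _ _)
    (hc.stronglyMeasurableAtFilter _ _) hc.continuousAt

lemma continuous_tailVariation (hf : ContDiff ℝ 1 f) : Continuous (tailVariation f R) :=
  continuous_iff_continuousAt.2 fun t => (hasDerivAt_tailVariation hf t).continuousAt

lemma antitone_tailVariation (hf : ContDiff ℝ 1 f) : Antitone (tailVariation f R) :=
  antitone_of_hasDerivAt_nonpos (hasDerivAt_tailVariation hf) fun t => by simp

lemma exists_lipschitzWith_tailVariation (hf : ContDiff ℝ 1 f) (hc : HasCompactSupport f) :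
    ∃ K, LipschitzWith K (tailVariation f R) := by
  obtain ⟨K, hK⟩ := hc.deriv.exists_bound_of_continuous hf.continuous_deriv_one
  refine ⟨K.toNNReal, lipschitzWith_of_nnnorm_deriv_le
    (fun t => (hasDerivAt_tailVariation hf t).differentiableAt) fun t => ?_⟩
  rw [(hasDerivAt_tailVariation hf t).deriv, nnnorm_neg, nnnorm_abs]
  exact NNReal.le_toNNReal_of_coe_le (hK t)

lemma deriv_eq_zero_of_tsupport_subset_Iio (hfR : tsupport f ⊆ Iio R) {t : ℝ} (ht : R ≤ t) :
    deriv f t = 0 := by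
  by_contra hne
  exact ht.not_gt (hfR (support_deriv_subset hne))

lemma tailVariation_eq_zero_of_le (hfR : tsupport f ⊆ Iio R) {t : ℝ} (ht : R ≤ t) :
    tailVariation f R t = 0 := by
  rw [tailVariation, intervalIntegral.integral_symm, neg_eq_zero]
  refine intervalIntegral.integral_zero_ae (ae_of_all _ fun s hs => ?_)
  rw [uIoc_of_le ht] at hs
  rw [deriv_eq_zero_of_tsupport_subset_Iio hfR hs.1.le, abs_zero]

lemma abs_le_tailVariation (hf : ContDiff ℝ 1 f) (hfR : tsupport f ⊆ Iio R) (t : ℝ) :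
    |f t| ≤ tailVariation f R t := by
  have hf0 : ∀ s, R ≤ s → f s = 0 := fun s hs =>
    image_eq_zero_of_notMem_tsupport fun h => hs.not_gt (hfR h)
  rcases le_total R t with ht | ht
  · rw [hf0 t ht, abs_zero, tailVariation_eq_zero_of_le hfR ht]
  have hftc : ∫ s in t..R, deriv f s = f R - f t :=
    intervalIntegral.integral_deriv_eq_sub (fun s _ => hf.differentiable_one s)
      (hf.continuous_deriv_one.intervalIntegrable _ _)
  rw [← abs_neg, ← zero_sub, ← hf0 R le_rfl, ← hftc]
  exact intervalIntegral.abs_integral_le_integral_abs ht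

lemma tailVariation_nonneg (hf : ContDiff ℝ 1 f) (hfR : tsupport f ⊆ Iio R) (t : ℝ) :
    0 ≤ tailVariation f R t :=
  (abs_nonneg _).trans (abs_le_tailVariation hf hfR t)

lemma continuous_abs_deriv_rpow {p : ℝ} (hp : 0 < p) (hf : ContDiff ℝ 1 f) :
    Continuous fun t => |deriv f t| ^ p :=
  hf.continuous_deriv_one.abs.rpow_const fun _ => .inr hp.le

lemma continuous_tailVariation_rpow {p : ℝ} (hp : 0 < p) (hf : ContDiff ℝ 1 f) :
    Continuous fun t => tailVariation f R t ^ p :=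
  (continuous_tailVariation hf).rpow_const fun _ => .inr hp.le

lemma integral_pow_mul_sub (n : ℕ) (Λ : ℝ) {U V : ℝ → ℝ} (hU : Continuous U) (hV : Continuous V)
    (a b : ℝ) : ∫ t in a..b, t ^ n * (Λ * U t - V t) =
      Λ * (∫ t in a..b, t ^ n * U t) - ∫ t in a..b, t ^ n * V t := by
  simp only [mul_sub, mul_left_comm _ Λ]
  rw [intervalIntegral.integral_sub, intervalIntegral.integral_const_mul] <;>
    exact Continuous.intervalIntegrable (by fun_prop) a b

lemma integral_energyGap_pos {n : ℕ} {p Λ : ℝ} (hp : 0 < p) (hR : 0 ≤ R) (hΛ : 0 ≤ Λ)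
    (hf : ContDiff ℝ 1 f) (hfR : tsupport f ⊆ Iio R)
    (hlt : ∫⁻ t, ENNReal.ofReal (|deriv f t| ^ p) ∂radialMeasure n <
      ENNReal.ofReal Λ * ∫⁻ t, ENNReal.ofReal (|f t| ^ p) ∂radialMeasure n) :
    0 < ∫ t in (0)..R, t ^ n * (Λ * tailVariation f R t ^ p - |deriv f t| ^ p) := by
  have hU := continuous_tailVariation_rpow (R := R) hp hf
  have hV := continuous_abs_deriv_rpow hp hf
  have henergy : ∫⁻ t, ENNReal.ofReal (|deriv f t| ^ p) ∂radialMeasure n =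
      ENNReal.ofReal (∫ t in (0)..R, t ^ n * |deriv f t| ^ p) := by
    rw [lintegral_radialMeasure_eq_setLIntegral_Ioo n fun t ht => ?_,
      setLIntegral_Ioo_radialMeasure_ofReal n hV (fun _ => by positivity) le_rfl hR]
    simp [deriv_eq_zero_of_tsupport_subset_Iio hfR ht, zero_rpow hp.ne']
  have hmass : ∫⁻ t, ENNReal.ofReal (tailVariation f R t ^ p) ∂radialMeasure n =
      ENNReal.ofReal (∫ t in (0)..R, t ^ n * tailVariation f R t ^ p) := by
    rw [lintegral_radialMeasure_eq_setLIntegral_Ioo n fun t ht => ?_,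
      setLIntegral_Ioo_radialMeasure_ofReal n hU
        (fun t => rpow_nonneg (tailVariation_nonneg hf hfR t) p) le_rfl hR]
    simp [tailVariation_eq_zero_of_le hfR ht, zero_rpow hp.ne']
  have hdom : ∫⁻ t, ENNReal.ofReal (|f t| ^ p) ∂radialMeasure n ≤
      ∫⁻ t, ENNReal.ofReal (tailVariation f R t ^ p) ∂radialMeasure n :=
    lintegral_mono fun t => ENNReal.ofReal_le_ofReal
      (rpow_le_rpow (abs_nonneg _) (abs_le_tailVariation hf hfR t) hp.le)
  rw [integral_pow_mul_sub n Λ hU hV, sub_pos]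
  refine (ENNReal.ofReal_lt_ofReal_iff_of_nonneg ?_).1 ?_
  · exact intervalIntegral.integral_nonneg hR fun t ht => mul_nonneg (pow_nonneg ht.1 n)
      (rpow_nonneg (abs_nonneg _) p)
  · rw [ENNReal.ofReal_mul hΛ, ← henergy, ← hmass]
    exact hlt.trans_le (mul_le_mul' le_rfl hdom)

lemma exists_integral_energyGap_nonneg {n : ℕ} {p Λ : ℝ} (hp : 0 < p) (hR : 0 ≤ R) (hΛ : 0 ≤ Λ)
    (hf : ContDiff ℝ 1 f) (hfR : tsupport f ⊆ Iio R)
    (hlt : ∫⁻ t, ENNReal.ofReal (|deriv f t| ^ p) ∂radialMeasure n <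
      ENNReal.ofReal Λ * ∫⁻ t, ENNReal.ofReal (|f t| ^ p) ∂radialMeasure n) :
    ∃ σ ∈ Icc 0 R, 0 < tailVariation f R σ ∧ ∀ s, σ ≤ s →
      0 ≤ ∫ t in σ..s, t ^ n * (Λ * tailVariation f R t ^ p - |deriv f t| ^ p) := by
  have hU := continuous_tailVariation_rpow (R := R) hp hf
  have hV := continuous_abs_deriv_rpow hp hf
  obtain ⟨σ, hσ, hpos, hgap⟩ := exists_forall_integral_nonneg (by fun_prop) hR
    (integral_energyGap_pos hp hR hΛ hf hfR hlt) fun t ht => by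
      simp [tailVariation_eq_zero_of_le hfR ht, deriv_eq_zero_of_tsupport_subset_Iio hfR ht,
        zero_rpow hp.ne']
  refine ⟨σ, hσ, (tailVariation_nonneg hf hfR σ).lt_of_ne' fun hσ0 => ?_, hgap⟩
  refine hpos.not_ge ?_
  rw [← neg_nonneg, ← intervalIntegral.integral_neg]
  refine intervalIntegral.integral_nonneg hσ.2 fun t ht => ?_
  have ht0 : tailVariation f R t = 0 :=
    le_antisymm (hσ0 ▸ antitone_tailVariation hf ht.1) (tailVariation_nonneg hf hfR t)
  rw [ht0, zero_rpow hp.ne', mul_zero, zero_sub, mul_neg, neg_neg]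
  exact mul_nonneg (pow_nonneg (hσ.1.trans ht.1) n) (rpow_nonneg (abs_nonneg _) p)

lemma ae_abs_deriv_tailVariation_max (hf : ContDiff ℝ 1 f) (σ : ℝ) :
    ∀ᵐ t, |deriv (fun t => tailVariation f R (max t σ)) t| =
      (Ioi σ).indicator (fun t => |deriv f t|) t := by
  filter_upwards [(countable_singleton σ).ae_notMem volume] with t ht
  rcases lt_or_gt_of_ne ht with hlt | hgt
  · have hloc : (fun t => tailVariation f R (max t σ)) =ᶠ[𝓝 t] fun _ => tailVariation f R σ := by
      filter_upwards [eventually_lt_nhds hlt] with s hs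
      rw [max_eq_right hs.le]
    rw [hloc.deriv_eq, deriv_const, abs_zero, indicator_of_notMem (notMem_Ioi.2 hlt.le)]
  · have hloc : (fun t => tailVariation f R (max t σ)) =ᶠ[𝓝 t] tailVariation f R := by
      filter_upwards [eventually_gt_nhds hgt] with s hs
      rw [max_eq_left hs.le]
    rw [hloc.deriv_eq, (hasDerivAt_tailVariation hf t).deriv, abs_neg, abs_abs,
      indicator_of_mem (mem_Ioi.2 hgt)]

lemma setLIntegral_deriv_tailVariation_max (n : ℕ) {p : ℝ} (hp : 0 < p) (hf : ContDiff ℝ 1 f)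
    (σ s : ℝ) :
    ∫⁻ t in Iio s, ENNReal.ofReal (|deriv (fun t => tailVariation f R (max t σ)) t| ^ p)
      ∂radialMeasure n = ∫⁻ t in Ioo σ s, ENNReal.ofReal (|deriv f t| ^ p) ∂radialMeasure n := by
  rw [← Ioi_inter_Iio, ← setLIntegral_indicator measurableSet_Ioi]
  refine lintegral_congr_ae (ae_restrict_of_ae ?_)
  filter_upwards [ae_radialMeasure_of_ae (ae_abs_deriv_tailVariation_max hf σ)] with t ht
  rw [ht]
  by_cases h : t ∈ Ioi σ <;> simp [h, zero_rpow hp.ne']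

end TailVariation

/-- Freezing the tail variation of `f` below `σ` removes the energy there while keeping the mass:
for the `σ` minimizing the primitive of the energy gap, no ball has excess energy. -/
theorem exists_radialProfile {n : ℕ} {p r R Λ : ℝ} {f : ℝ → ℝ} (hp : 0 < p) (hΛ : 0 ≤ Λ)
    (hR : 0 ≤ R) (hRr : R < r) (hf : ContDiff ℝ 1 f) (hc : HasCompactSupport f)
    (hfR : tsupport f ⊆ Iio R)
    (hlt : ∫⁻ t, ENNReal.ofReal (|deriv f t| ^ p) ∂radialMeasure n <
      ENNReal.ofReal Λ * ∫⁻ t, ENNReal.ofReal (|f t| ^ p) ∂radialMeasure n) :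
    ∃ φ, RadialProfile n p r Λ φ := by
  obtain ⟨σ, hσ, hσ0, hgap⟩ := exists_integral_energyGap_nonneg hp hR hΛ hf hfR hlt
  refine ⟨fun t => tailVariation f R (max t σ), ?_, ?_, ?_, ?_, fun s => ?_⟩
  · exact (antitone_tailVariation hf).comp_monotone fun _ _ h => max_le_max_right σ h
  · obtain ⟨K, hK⟩ := exists_lipschitzWith_tailVariation (R := R) hf hc
    exact ⟨_, hK.comp (LipschitzWith.id.max_const σ)⟩
  · refine Subset.trans (closure_minimal (fun t ht => ?_) isClosed_Iic) (Iic_subset_Iio.2 hRr)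
    by_contra htR
    exact ht (tailVariation_eq_zero_of_le hfR ((not_le.1 htR).le.trans (le_max_left t σ)))
  · simpa only [max_eq_right hσ.1] using hσ0
  rw [setLIntegral_deriv_tailVariation_max n hp hf]
  rcases le_total s σ with hs | hs
  · simp [Ioo_eq_empty hs.not_gt]
  have hU := continuous_tailVariation_rpow (R := R) hp hf
  have hV := continuous_abs_deriv_rpow hp hf
  have hgap_s := hgap s hs
  rw [integral_pow_mul_sub n Λ hU hV, sub_nonneg] at hgap_s
  calc ∫⁻ t in Ioo σ s, ENNReal.ofReal (|deriv f t| ^ p) ∂radialMeasure n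
      ≤ ENNReal.ofReal Λ *
          ∫⁻ t in Ioo σ s, ENNReal.ofReal (tailVariation f R t ^ p) ∂radialMeasure n := by
        rw [setLIntegral_Ioo_radialMeasure_ofReal n hV (fun _ => by positivity) hσ.1 hs,
          setLIntegral_Ioo_radialMeasure_ofReal n hU
            (fun t => rpow_nonneg (tailVariation_nonneg hf hfR t) p) hσ.1 hs,
          ← ENNReal.ofReal_mul hΛ]
        exact ENNReal.ofReal_le_ofReal hgap_s
    _ = ENNReal.ofReal Λ *
          ∫⁻ t in Ioo σ s, ENNReal.ofReal (tailVariation f R (max t σ) ^ p) ∂radialMeasure n := by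
        congr 1
        exact setLIntegral_congr_fun measurableSet_Ioo fun t ht => by rw [max_eq_left ht.1.le]
    _ ≤ _ := mul_le_mul' le_rfl (lintegral_mono_set Ioo_subset_Iio_self)

section Ray

open Module (finrank)

variable {E : Type*} [NormedAddCommGroup E] [NormedSpace ℝ E]

lemma isClosedEmbedding_add_smul (c : E) {θ : E} (hθ : ‖θ‖ = 1) :
    Topology.IsClosedEmbedding fun t : ℝ => c + t • θ :=
  (Isometry.of_dist_eq fun s t => by
    rw [dist_add_left, dist_eq_norm, ← sub_smul, norm_smul, hθ, mul_one, Real.dist_eq,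
      Real.norm_eq_abs]).isClosedEmbedding

lemma tsupport_comp_add_smul_subset_Iio {v : E → ℝ} {c : E} {R : ℝ} (hv : tsupport v ⊆ ball c R)
    {θ : E} (hθ : ‖θ‖ = 1) : tsupport (fun t : ℝ => v (c + t • θ)) ⊆ Iio R := fun t ht => by
  have hmem := hv (tsupport_comp_subset_preimage v (f := fun t : ℝ => c + t • θ) (by fun_prop) ht)
  rw [mem_ball, dist_self_add_left, norm_smul, hθ, mul_one] at hmem
  exact (le_abs_self t).trans_lt hmem

lemma abs_deriv_comp_add_smul_le {v : E → ℝ} (c : E) {θ : E} (hθ : ‖θ‖ = 1) {t : ℝ}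
    (hv : DifferentiableAt ℝ v (c + t • θ)) :
    |deriv (fun t : ℝ => v (c + t • θ)) t| ≤ ‖fderiv ℝ v (c + t • θ)‖ := by
  have hline : HasDerivAt (fun t : ℝ => c + t • θ) θ t := by
    simpa using ((hasDerivAt_id t).smul_const θ).const_add c
  have hcomp : HasDerivAt (fun t : ℝ => v (c + t • θ)) (fderiv ℝ v (c + t • θ) θ) t :=
    hv.hasFDerivAt.comp_hasDerivAt t hline
  rw [hcomp.deriv, ← Real.norm_eq_abs]
  simpa [hθ] using (fderiv ℝ v (c + t • θ)).le_opNorm θ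

theorem exists_radialProfile_of_lintegral_fderiv_lt [FiniteDimensional ℝ E] [Nontrivial E]
    [MeasurableSpace E] [BorelSpace E] (μ : Measure E) [μ.IsAddHaarMeasure] {p r Λ : ℝ} {c : E}
    {v : E → ℝ} (hp : 0 < p) (hr : 0 < r) (hΛ : 0 ≤ Λ) (hv : ContDiff ℝ 1 v)
    (hvc : HasCompactSupport v) (hvr : tsupport v ⊆ ball c r)
    (hlt : ∫⁻ x, ENNReal.ofReal (‖fderiv ℝ v x‖ ^ p) ∂μ <
      ENNReal.ofReal Λ * ∫⁻ x, ENNReal.ofReal (|v x| ^ p) ∂μ) :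
    ∃ φ, RadialProfile (finrank ℝ E - 1) p r Λ φ := by
  have hmeas : Measurable fun x => ENNReal.ofReal (|v x| ^ p) := by
    have := hv.continuous.measurable
    fun_prop
  rw [lintegral_eq_lintegral_sphere_radialMeasure μ c
      (((measurable_fderiv ℝ v).norm.pow_const p).ennreal_ofReal),
    lintegral_eq_lintegral_sphere_radialMeasure μ c hmeas,
    ← lintegral_const_mul' _ _ ENNReal.ofReal_ne_top] at hlt
  obtain ⟨θ, hθlt⟩ : ∃ θ : sphere (0 : E) 1,
      ∫⁻ t, ENNReal.ofReal (‖fderiv ℝ v (c + t • θ.1)‖ ^ p) ∂radialMeasure (finrank ℝ E - 1) <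
        ENNReal.ofReal Λ *
          ∫⁻ t, ENNReal.ofReal (|v (c + t • θ.1)| ^ p) ∂radialMeasure (finrank ℝ E - 1) := by
    by_contra! hle
    exact hlt.not_ge (lintegral_mono hle)
  have hθ : ‖θ.1‖ = 1 := norm_eq_of_mem_sphere θ
  obtain ⟨R, hR, hvR⟩ := exists_pos_lt_subset_ball hr (isClosed_tsupport v) hvr
  refine exists_radialProfile hp hΛ hR.1.le hR.2 (hv.comp (by fun_prop))
    (hvc.comp_isClosedEmbedding (isClosedEmbedding_add_smul c hθ))
    (tsupport_comp_add_smul_subset_Iio hvR hθ) (lt_of_le_of_lt (lintegral_mono fun t => ?_) hθlt)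
  exact ENNReal.ofReal_le_ofReal (rpow_le_rpow (abs_nonneg _)
    (abs_deriv_comp_add_smul_le c hθ (hv.differentiable_one _)) hp.le)

end Ray

end RadialProfile

section ParabolicDist

variable {E : Type*} [NormedAddCommGroup E] [InnerProductSpace ℝ E] {a e x θ : E}

/-- The function whose superlevel sets are the exteriors of the paraboloids with focus `a` and
axis `-e`. Along a ray from `a` making the angle `α` with `e`, it is the distance to `a` contracted
by the factor `cos² (α / 2)`, while its gradient only has length `cos (α / 2)`. -/
noncomputable def parabolicDist (a e x : E) : ℝ := (‖x - a‖ + inner ℝ e (x - a)) / 2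

/-- `cos² (α / 2)`, where `α` is the angle between the unit vectors `e` and `θ`. -/
noncomputable def cosSqHalfAngle (e θ : E) : ℝ := (1 + inner ℝ e θ) / 2

lemma cosSqHalfAngle_le_one (he : ‖e‖ = 1) (hθ : ‖θ‖ = 1) : cosSqHalfAngle e θ ≤ 1 := by
  have := real_inner_le_one_of_norm_eq_one he hθ
  rw [cosSqHalfAngle]
  linarith

lemma continuous_cosSqHalfAngle (e : E) : Continuous (cosSqHalfAngle e) := by
  unfold cosSqHalfAngle
  fun_prop

lemma parabolicDist_add_smul (a e : E) (hθ : ‖θ‖ = 1) {t : ℝ} (ht : 0 ≤ t) :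
    parabolicDist a e (a + t • θ) = cosSqHalfAngle e θ * t := by
  rw [parabolicDist, cosSqHalfAngle, add_sub_cancel_left, norm_smul, hθ, Real.norm_of_nonneg ht,
    real_inner_smul_right]
  ring

lemma inner_le_parabolicDist (a x : E) (he : ‖e‖ = 1) :
    inner ℝ e (x - a) ≤ parabolicDist a e x := by
  have := real_inner_le_norm e (x - a)
  rw [he, one_mul] at this
  rw [parabolicDist]
  linarith

lemma lipschitzWith_parabolicDist (a : E) (he : ‖e‖ = 1) : LipschitzWith 1 (parabolicDist a e) := by
  refine LipschitzWith.of_dist_le_mul fun x y => ?_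
  have hnorm : |‖x - a‖ - ‖y - a‖| ≤ ‖x - y‖ := by
    simpa using abs_norm_sub_norm_le (x - a) (y - a)
  have hinner : |inner ℝ e (x - a) - inner ℝ e (y - a)| ≤ ‖x - y‖ := by
    simpa [← inner_sub_right, he] using abs_real_inner_le_norm e (x - y)
  rw [abs_le] at hnorm hinner
  rw [NNReal.coe_one, one_mul, Real.dist_eq, dist_eq_norm, abs_le, parabolicDist, parabolicDist]
  constructor <;> linarith

lemma hasFDerivAt_parabolicDist (e : E) (hx : x ≠ a) :
    HasFDerivAt (parabolicDist a e)
      (innerSL ℝ ((1 / 2 : ℝ) • (‖x - a‖⁻¹ • (x - a) + e))) x := by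
  have hpos : 0 < ‖x - a‖ := norm_sub_pos_iff.2 hx
  have hsub : HasFDerivAt (fun y : E => y - a) (ContinuousLinearMap.id ℝ E) x :=
    (hasFDerivAt_id x).sub_const a
  have hnorm : HasFDerivAt (fun y : E => ‖y - a‖) (‖x - a‖⁻¹ • innerSL ℝ (x - a)) x := by
    have := hsub.norm_sq.sqrt (by positivity)
    simp only [sqrt_sq (norm_nonneg _)] at this
    refine this.congr_fderiv (ContinuousLinearMap.ext fun y => ?_)
    simp
    field_simp
  have hinner : HasFDerivAt (fun y : E => inner ℝ e (y - a)) (innerSL ℝ e) x :=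
    (innerSL ℝ e).hasFDerivAt.comp x hsub
  have hψ : parabolicDist a e = fun y => 1 / 2 * (‖y - a‖ + inner ℝ e (y - a)) := by
    ext y
    rw [parabolicDist]
    ring
  rw [hψ]
  exact ((hnorm.add hinner).const_mul (1 / 2)).congr_fderiv (by simp)

lemma add_smul_ne_self (a : E) (hθ : ‖θ‖ = 1) {t : ℝ} (ht : 0 < t) : a + t • θ ≠ a := by
  simp [ht.ne', ← norm_eq_zero (a := θ), hθ]

lemma norm_fderiv_parabolicDist_add_smul (a : E) (he : ‖e‖ = 1) (hθ : ‖θ‖ = 1) {t : ℝ}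
    (ht : 0 < t) : ‖fderiv ℝ (parabolicDist a e) (a + t • θ)‖ = √(cosSqHalfAngle e θ) := by
  have hunit : ‖a + t • θ - a‖⁻¹ • (a + t • θ - a) = θ := by
    rw [add_sub_cancel_left, norm_smul, hθ, mul_one, Real.norm_of_nonneg ht.le,
      inv_smul_smul₀ ht.ne']
  rw [(hasFDerivAt_parabolicDist e (add_smul_ne_self a hθ ht)).fderiv, innerSL_apply_norm, hunit,
    ← sqrt_sq (norm_nonneg ((1 / 2 : ℝ) • (θ + e))), norm_smul, mul_pow, norm_add_sq_real, hθ, he,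
    real_inner_comm, cosSqHalfAngle, Real.norm_of_nonneg one_half_pos.le]
  congr 1
  ring

lemma ae_norm_fderiv_comp_parabolicDist {φ : ℝ → ℝ} {K : NNReal} (hφ : LipschitzWith K φ) (n : ℕ)
    (a : E) (he : ‖e‖ = 1) (hθ : ‖θ‖ = 1) (hη : 0 < cosSqHalfAngle e θ) :
    ∀ᵐ t ∂radialMeasure n, ‖fderiv ℝ (fun x => φ (parabolicDist a e x)) (a + t • θ)‖ =
      √(cosSqHalfAngle e θ) * |deriv φ (cosSqHalfAngle e θ * t)| := by
  have hdiff : ∀ᵐ t, DifferentiableAt ℝ φ (cosSqHalfAngle e θ * t) := by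
    filter_upwards [(hφ.comp (lipschitzWith_smul (cosSqHalfAngle e θ))).ae_differentiableAt_real]
      with t ht
    have := DifferentiableAt.comp (cosSqHalfAngle e θ * t)
      (g := fun s => φ (cosSqHalfAngle e θ * s)) (f := fun s => (cosSqHalfAngle e θ)⁻¹ * s)
      (by rwa [inv_mul_cancel_left₀ hη.ne']) (by fun_prop)
    simpa only [Function.comp_def, mul_inv_cancel_left₀ hη.ne'] using this
  filter_upwards [ae_radialMeasure_of_ae hdiff, ae_radialMeasure_pos n] with t ht ht0
  rw [← parabolicDist_add_smul a e hθ ht0.le] at ht ⊢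
  have hcomp := ht.hasDerivAt.comp_hasFDerivAt (a + t • θ)
    (hasFDerivAt_parabolicDist e (add_smul_ne_self a hθ ht0)).differentiableAt.hasFDerivAt
  rw [HasFDerivAt.fderiv (f := fun x => φ (parabolicDist a e x)) hcomp, norm_smul,
    norm_fderiv_parabolicDist_add_smul a he hθ ht0, Real.norm_eq_abs, mul_comm]

end ParabolicDist

section ConvexRays

open scoped ENNReal
open Module (finrank)

variable {E : Type*} [NormedAddCommGroup E] [NormedSpace ℝ E] {Ω : Set E} {a θ : E}

lemma add_smul_mem_of_lt_of_mem_closure (hc : Convex ℝ Ω) (ho : IsOpen Ω)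
    (ha : a ∈ closure Ω) {s t : ℝ} (hs : 0 < s) (hst : s < t) (ht : a + t • θ ∈ Ω) :
    a + s • θ ∈ Ω := by
  have hmem := hc.openSegment_closure_interior_subset_interior ha (ho.interior_eq.symm ▸ ht)
  rw [ho.interior_eq] at hmem
  refine hmem ⟨1 - s / t, s / t, sub_pos.2 ((div_lt_one (hs.trans hst)).2 hst),
    div_pos hs (hs.trans hst), by ring, ?_⟩
  match_scalars
  · ring
  · field_simp [(hs.trans hst).ne']

lemma exists_forall_add_smul_mem_iff_lt (hc : Convex ℝ Ω) (ho : IsOpen Ω)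
    (hb : Bornology.IsBounded Ω) (ha : a ∈ closure Ω) (hθ : ‖θ‖ = 1) :
    ∃ R : ℝ, ∀ t, 0 < t → (a + t • θ ∈ Ω ↔ t < R) := by
  set I := {t : ℝ | 0 < t ∧ a + t • θ ∈ Ω}
  rcases I.eq_empty_or_nonempty with hempty | hne
  · exact ⟨0, fun t ht => ⟨fun h => (hempty.subset ⟨ht, h⟩).elim, fun h => (h.not_gt ht).elim⟩⟩
  have hIo : IsOpen I := isOpen_Ioi.inter (ho.preimage (by fun_prop))
  have hIb : BddAbove I := by
    obtain ⟨D, hD⟩ := hb.subset_closedBall a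
    refine ⟨D, fun t ht => (le_abs_self t).trans ?_⟩
    simpa [norm_smul, hθ] using hD ht.2
  refine ⟨sSup I, fun t ht => ⟨fun h => ?_, fun h => ?_⟩⟩
  · obtain ⟨s, hts, hs⟩ := (hIo.eventually_mem ⟨ht, h⟩).exists_gt
    exact hts.trans_le (le_csSup hIb hs)
  · obtain ⟨s, hs, hts⟩ := exists_lt_of_lt_csSup hne h
    exact add_smul_mem_of_lt_of_mem_closure hc ho ha ht hts hs.2

lemma setLIntegral_Iio_radialMeasure_of_nonpos (n : ℕ) {R : ℝ} (hR : R ≤ 0) (f : ℝ → ℝ≥0∞) :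
    ∫⁻ t in Iio R, f t ∂radialMeasure n = 0 := by
  refine setLIntegral_measure_zero _ _ (measure_mono_null ?_ (ae_radialMeasure_pos n))
  exact fun t ht => (hR.trans' (le_of_lt ht)).not_gt

lemma setLIntegral_eq_lintegral_sphere_Iio [FiniteDimensional ℝ E] [Nontrivial E]
    [MeasurableSpace E] [BorelSpace E] (μ : Measure E) [μ.IsAddHaarMeasure]
    (hΩ : MeasurableSet Ω) {R : sphere (0 : E) 1 → ℝ}
    (hR : ∀ (θ : sphere (0 : E) 1) t, 0 < t → (a + t • (θ : E) ∈ Ω ↔ t < R θ))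
    {f : E → ℝ≥0∞} (hf : Measurable f) :
    ∫⁻ x in Ω, f x ∂μ = ∫⁻ θ, ∫⁻ t in Iio (R θ), f (a + t • (θ : E))
      ∂radialMeasure (finrank ℝ E - 1) ∂μ.toSphere := by
  rw [← lintegral_indicator hΩ, lintegral_eq_lintegral_sphere_radialMeasure μ a (hf.indicator hΩ)]
  refine lintegral_congr fun θ => ?_
  rw [← lintegral_indicator measurableSet_Iio]
  refine lintegral_congr_ae ?_
  filter_upwards [ae_radialMeasure_pos (finrank ℝ E - 1)] with t ht
  simp only [indicator, hR θ t ht, mem_Iio]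

end ConvexRays

section OffAxis

open Module (finrank)

variable {E : Type*} [NormedAddCommGroup E] [InnerProductSpace ℝ E] {Ω : Set E} {e : E}

lemma exists_ne_zero_inner_eq_zero (hE : 1 < finrank ℝ E) (e : E) :
    ∃ f : E, f ≠ 0 ∧ inner ℝ e f = 0 := by
  have hne : (ℝ ∙ e)ᗮ ≠ ⊥ := fun h => by
    have : FiniteDimensional ℝ E := Module.finite_of_finrank_pos (by omega)
    rw [Submodule.orthogonal_eq_bot_iff] at h
    have hle : finrank ℝ (ℝ ∙ e) ≤ 1 := (finrank_span_le_card {e}).trans (by simp)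
    rw [h, finrank_top] at hle
    omega
  obtain ⟨f, hf, hf0⟩ := Submodule.exists_mem_ne_zero_of_ne_bot hne
  exact ⟨f, hf0, Submodule.mem_orthogonal_singleton_iff_inner_right.1 hf⟩

lemma exists_inner_lt_norm_of_isOpen (hE : 1 < finrank ℝ E) (ho : IsOpen Ω) (hne : Ω.Nonempty)
    (a : E) (he : ‖e‖ = 1) : ∃ y ∈ Ω, inner ℝ e (y - a) < ‖y - a‖ := by
  obtain ⟨y, hy⟩ := hne
  by_contra! hle
  have haxis : ‖y - a‖ • e = y - a := by
    have := inner_eq_norm_mul_iff_real.1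
      ((real_inner_le_norm e (y - a)).antisymm (by simpa [he] using hle y hy))
    rwa [he, one_smul] at this
  obtain ⟨f, hf, hef⟩ := exists_ne_zero_inner_eq_zero hE e
  have hnhds : ∀ᶠ t in nhdsWithin (0 : ℝ) {0}ᶜ, y + t • f ∈ Ω :=
    ((Continuous.tendsto' (by fun_prop) _ _ (by simp)).eventually (ho.mem_nhds hy)).filter_mono
      nhdsWithin_le_nhds
  obtain ⟨t, ht, ht0⟩ := (hnhds.and self_mem_nhdsWithin).exists
  have hinner : inner ℝ (y - a) (t • f) = 0 := by
    rw [← haxis, real_inner_smul_left, real_inner_smul_right, hef, mul_zero, mul_zero]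
  have hpyth := norm_add_sq_eq_norm_sq_add_norm_sq_of_inner_eq_zero _ _ hinner
  have hpos : 0 < ‖t • f‖ := norm_pos_iff.2 (smul_ne_zero ht0 hf)
  have hlt := hle _ ht
  rw [add_sub_right_comm, inner_add_right, real_inner_smul_right, hef, mul_zero, add_zero] at hlt
  have hle' := real_inner_le_norm e (y - a)
  rw [he, one_mul] at hle'
  nlinarith [mul_self_le_mul_self (norm_nonneg _) (hlt.trans hle'), mul_pos hpos hpos]

end OffAxis

section UniformGain

open scoped ENNReal

variable {α : Type*} [MeasurableSpace α] {μ : Measure α} {T : Set α} {δ C K : ℝ≥0∞}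
  {w m : α → ℝ≥0∞}

lemma lintegral_mul_add_le_lintegral (hT : MeasurableSet T) (hw : ∀ x, w x ≤ 1)
    (hwT : ∀ x ∈ T, w x + δ ≤ 1) (hmT : ∀ x ∈ T, K ≤ m x) :
    ∫⁻ x, w x * m x ∂μ + δ * K * μ T ≤ ∫⁻ x, m x ∂μ := by
  rw [← lintegral_indicator_const hT, ← lintegral_add_right _ (measurable_const.indicator hT)]
  refine lintegral_mono fun x => ?_
  by_cases hx : x ∈ T
  · calc w x * m x + T.indicator (fun _ => δ * K) x ≤ w x * m x + δ * m x := by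
          rw [indicator_of_mem hx]
          gcongr
          exact hmT x hx
      _ = (w x + δ) * m x := (add_mul _ _ _).symm
      _ ≤ m x := mul_le_of_le_one_left' (hwT x hx)
  · rw [indicator_of_notMem hx, add_zero]
    exact mul_le_of_le_one_left' (hw x)

lemma exists_lintegral_mul_le_of_uniform_gain (μ : Measure α) [IsFiniteMeasure μ]
    (hT : MeasurableSet T) (hμT : μ T ≠ 0) (hδ : δ ≠ 0) (hC : C ≠ ∞) :
    ∃ κ < 1, ∀ (w m : α → ℝ≥0∞) (K : ℝ≥0∞), (∀ x, w x ≤ 1) → (∀ x ∈ T, w x + δ ≤ 1) →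
      (∀ x, m x ≤ C * K) → (∀ x ∈ T, K ≤ m x) →
      ∫⁻ x, w x * m x ∂μ ≤ κ * ∫⁻ x, m x ∂μ := by
  set ε := min 1 (δ * μ T / (C * μ univ))
  have hε : ε ≠ 0 := (lt_min one_pos (ENNReal.div_pos (mul_ne_zero hδ hμT)
    (ENNReal.mul_ne_top hC (measure_ne_top _ _)))).ne'
  have hε_top : 1 + ε ≠ ∞ :=
    ENNReal.add_ne_top.2 ⟨ENNReal.one_ne_top,
      ne_top_of_le_ne_top ENNReal.one_ne_top (min_le_left _ _)⟩
  refine ⟨(1 + ε)⁻¹, ENNReal.inv_lt_one.2 (ENNReal.lt_add_right ENNReal.one_ne_top hε),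
    fun w m K hw hwT hmC hmT => ?_⟩
  have hgain : ε * ∫⁻ x, w x * m x ∂μ ≤ δ * K * μ T :=
    calc ε * ∫⁻ x, w x * m x ∂μ ≤ ε * ∫⁻ _, C * K ∂μ := by
          gcongr ε * ?_
          exact lintegral_mono fun x => (mul_le_of_le_one_left' (hw x)).trans (hmC x)
      _ = ε * (C * μ univ) * K := by
          rw [lintegral_const]
          ring
      _ ≤ δ * μ T * K := mul_le_mul'
          ((mul_le_mul' (min_le_right _ _) le_rfl).trans (ENNReal.mul_le_of_le_div le_rfl)) le_rfl
      _ = δ * K * μ T := mul_right_comm _ _ _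
  refine (ENNReal.mul_le_iff_le_inv (by simp) hε_top).1 ?_
  calc (1 + ε) * ∫⁻ x, w x * m x ∂μ = ∫⁻ x, w x * m x ∂μ + ε * ∫⁻ x, w x * m x ∂μ := by ring
    _ ≤ ∫⁻ x, w x * m x ∂μ + δ * K * μ T := by gcongr
    _ ≤ ∫⁻ x, m x ∂μ := lintegral_mul_add_le_lintegral hT hw hwT hmT

end UniformGain

section Cone

open scoped ENNReal
open Module (finrank)

variable {E : Type*} [NormedAddCommGroup E] [InnerProductSpace ℝ E] {Ω : Set E} {a e θ : E}

lemma exists_sphere_add_smul_mem_and_cosSqHalfAngle_lt (hE : 1 < finrank ℝ E) (ho : IsOpen Ω)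
    (hne : Ω.Nonempty) (a : E) (he : ‖e‖ = 1) :
    ∃ ρ > (0 : ℝ), ∃ c < (1 : ℝ), ∃ θ : sphere (0 : E) 1,
      a + ρ • (θ : E) ∈ Ω ∧ cosSqHalfAngle e (θ : E) < c := by
  obtain ⟨y, hy, hlt⟩ := exists_inner_lt_norm_of_isOpen hE ho hne a he
  have hρ : 0 < ‖y - a‖ := norm_pos_iff.2 fun h => by simp [h] at hlt
  obtain ⟨c, hθc, hc⟩ : ∃ c, cosSqHalfAngle e (‖y - a‖⁻¹ • (y - a)) < c ∧ c < 1 := by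
    refine exists_between ?_
    have : ‖y - a‖⁻¹ * inner ℝ e (y - a) < 1 := by
      rwa [← div_eq_inv_mul, div_lt_one hρ]
    rw [cosSqHalfAngle, real_inner_smul_right]
    linarith
  refine ⟨‖y - a‖, hρ, c, hc, ⟨‖y - a‖⁻¹ • (y - a), ?_⟩, ?_, hθc⟩
  · simp [norm_smul, hρ.ne']
  · simpa [smul_smul, hρ.ne'] using hy

namespace RadialProfile

variable {n : ℕ} {p r Λ : ℝ} {φ : ℝ → ℝ}

lemma setLIntegral_fderiv_comp_parabolicDist_le (h : RadialProfile n p r Λ φ) (a : E)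
    (he : ‖e‖ = 1) (hθ : ‖θ‖ = 1) (hη : 0 < cosSqHalfAngle e θ) (R : ℝ) :
    ∫⁻ t in Iio R, ENNReal.ofReal
        (‖fderiv ℝ (fun x => φ (parabolicDist a e x)) (a + t • θ)‖ ^ p) ∂radialMeasure n ≤
      ENNReal.ofReal (√(cosSqHalfAngle e θ) ^ p) * (ENNReal.ofReal Λ *
        ∫⁻ t in Iio R, ENNReal.ofReal (φ (parabolicDist a e (a + t • θ)) ^ p)
          ∂radialMeasure n) := by
  obtain ⟨K, hK⟩ := h.exists_lipschitz
  have henergy : ∀ᵐ t ∂(radialMeasure n).restrict (Iio R), ENNReal.ofReal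
      (‖fderiv ℝ (fun x => φ (parabolicDist a e x)) (a + t • θ)‖ ^ p) =
        ENNReal.ofReal (√(cosSqHalfAngle e θ) ^ p) *
          ENNReal.ofReal (|deriv φ (cosSqHalfAngle e θ * t)| ^ p) := by
    filter_upwards [ae_restrict_of_ae (ae_norm_fderiv_comp_parabolicDist hK n a he hθ hη)] with t ht
    rw [ht, mul_rpow (sqrt_nonneg _) (abs_nonneg _), ENNReal.ofReal_mul (by positivity)]
  have hmass : ∀ᵐ t ∂(radialMeasure n).restrict (Iio R),
      ENNReal.ofReal (φ (parabolicDist a e (a + t • θ)) ^ p) =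
        ENNReal.ofReal (φ (cosSqHalfAngle e θ * t) ^ p) := by
    filter_upwards [ae_restrict_of_ae (ae_radialMeasure_pos n)] with t ht
    rw [parabolicDist_add_smul a e hθ ht.le]
  rw [lintegral_congr_ae henergy, lintegral_congr_ae hmass,
    lintegral_const_mul' _ _ ENNReal.ofReal_ne_top]
  gcongr
  exact h.lintegral_deriv_comp_mul_le hη R

lemma setLIntegral_comp_parabolicDist_le (h : RadialProfile n p r Λ φ) (hp : 0 ≤ p) (a : E)
    (hθ : ‖θ‖ = 1) (hη : 1 / 2 ≤ cosSqHalfAngle e θ) {R b ρ : ℝ} (hb : 2 ≤ b) (hR : R ≤ b * ρ) :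
    ∫⁻ t in Iio R, ENNReal.ofReal (φ (parabolicDist a e (a + t • θ)) ^ p) ∂radialMeasure n ≤
      ENNReal.ofReal (b ^ (n + 1)) * ∫⁻ t in Iio ρ, ENNReal.ofReal (φ t ^ p) ∂radialMeasure n := by
  refine le_trans ?_ (h.setLIntegral_comp_div_two_le hp hb ρ)
  refine (lintegral_mono_ae ?_).trans (lintegral_mono_set (Iio_subset_Iio hR))
  filter_upwards [ae_restrict_of_ae (ae_radialMeasure_pos n)] with t ht
  rw [parabolicDist_add_smul a e hθ ht.le]
  exact ENNReal.ofReal_le_ofReal (rpow_le_rpow (h.nonneg _) (h.antitone (by nlinarith)) hp)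

lemma le_setLIntegral_comp_parabolicDist (h : RadialProfile n p r Λ φ) (hp : 0 ≤ p) (a : E)
    (he : ‖e‖ = 1) (hθ : ‖θ‖ = 1) {R ρ : ℝ} (hR : ρ ≤ R) :
    ∫⁻ t in Iio ρ, ENNReal.ofReal (φ t ^ p) ∂radialMeasure n ≤
      ∫⁻ t in Iio R, ENNReal.ofReal (φ (parabolicDist a e (a + t • θ)) ^ p) ∂radialMeasure n := by
  refine (lintegral_mono_ae ?_).trans (lintegral_mono_set (Iio_subset_Iio hR))
  filter_upwards [ae_restrict_of_ae (ae_radialMeasure_pos n)] with t ht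
  rw [parabolicDist_add_smul a e hθ ht.le]
  exact ENNReal.ofReal_le_ofReal (rpow_le_rpow (h.nonneg _)
    (h.antitone (mul_le_of_le_one_left ht.le (cosSqHalfAngle_le_one he hθ))) hp)

end RadialProfile

section Sphere

variable {R : sphere (0 : E) 1 → ℝ}

lemma half_le_cosSqHalfAngle_of_pos
    (hR : ∀ (θ : sphere (0 : E) 1) t, 0 < t → (a + t • (θ : E) ∈ Ω ↔ t < R θ))
    (hhalf : ∀ x ∈ Ω, 0 ≤ inner ℝ e (x - a)) {θ : sphere (0 : E) 1} (hθ : 0 < R θ) :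
    1 / 2 ≤ cosSqHalfAngle e (θ : E) := by
  have hmem : a + (R θ / 2) • (θ : E) ∈ Ω := (hR θ _ (half_pos hθ)).2 (half_lt_self hθ)
  have := hhalf _ hmem
  rw [add_sub_cancel_left, real_inner_smul_right, mul_nonneg_iff_of_pos_left (half_pos hθ)] at this
  rw [cosSqHalfAngle]
  linarith

lemma le_of_subset_ball (hR : ∀ (θ : sphere (0 : E) 1) t, 0 < t → (a + t • (θ : E) ∈ Ω ↔ t < R θ))
    {D : ℝ} (hD : 0 < D) (hΩ : Ω ⊆ ball a D) (θ : sphere (0 : E) 1) : R θ ≤ D := by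
  by_contra! hlt
  have := hΩ ((hR θ D hD).2 hlt)
  simp [norm_smul, abs_of_pos hD] at this

variable [FiniteDimensional ℝ E] [MeasurableSpace E] [BorelSpace E] (μ : Measure E)
  [μ.IsAddHaarMeasure] {p : ℝ}

lemma RadialProfile.setLIntegral_fderiv_comp_parabolicDist_le_lintegral_sphere [Nontrivial E]
    {r Λ : ℝ} {φ : ℝ → ℝ} (h : RadialProfile (finrank ℝ E - 1) p r Λ φ) (ho : IsOpen Ω)
    (hR : ∀ (θ : sphere (0 : E) 1) t, 0 < t → (a + t • (θ : E) ∈ Ω ↔ t < R θ)) (he : ‖e‖ = 1)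
    (hhalf : ∀ x ∈ Ω, 0 ≤ inner ℝ e (x - a)) :
    ∫⁻ x in Ω, ENNReal.ofReal (‖fderiv ℝ (fun x => φ (parabolicDist a e x)) x‖ ^ p) ∂μ ≤
      ENNReal.ofReal Λ * ∫⁻ θ : sphere (0 : E) 1, ENNReal.ofReal (√(cosSqHalfAngle e (θ : E)) ^ p) *
        ∫⁻ t in Iio (R θ), ENNReal.ofReal (φ (parabolicDist a e (a + t • (θ : E))) ^ p)
          ∂radialMeasure (finrank ℝ E - 1) ∂μ.toSphere := by
  rw [setLIntegral_eq_lintegral_sphere_Iio μ ho.measurableSet hR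
      ((measurable_fderiv ℝ _).norm.pow_const p).ennreal_ofReal,
    ← lintegral_const_mul' _ _ ENNReal.ofReal_ne_top]
  refine lintegral_mono fun θ => ?_
  rcases le_or_gt (R θ) 0 with hθ | hθ
  · rw [setLIntegral_Iio_radialMeasure_of_nonpos _ hθ]
    exact zero_le
  · rw [mul_left_comm]
    exact h.setLIntegral_fderiv_comp_parabolicDist_le a he (norm_eq_of_mem_sphere θ)
      (one_half_pos.trans_le (half_le_cosSqHalfAngle_of_pos hR hhalf hθ)) _

lemma exists_lintegral_sphere_gain (hp : 0 < p) (hE : 1 < finrank ℝ E) (ho : IsOpen Ω)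
    (hb : Bornology.IsBounded Ω) (hne : Ω.Nonempty) (he : ‖e‖ = 1)
    (hR : ∀ (θ : sphere (0 : E) 1) t, 0 < t → (a + t • (θ : E) ∈ Ω ↔ t < R θ))
    (hhalf : ∀ x ∈ Ω, 0 ≤ inner ℝ e (x - a)) (n : ℕ) :
    ∃ κ : ℝ≥0∞, κ < 1 ∧ ∀ r Λ φ, RadialProfile n p r Λ φ →
      ∫⁻ θ : sphere (0 : E) 1, ENNReal.ofReal (√(cosSqHalfAngle e (θ : E)) ^ p) *
        ∫⁻ t in Iio (R θ), ENNReal.ofReal (φ (parabolicDist a e (a + t • (θ : E))) ^ p)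
          ∂radialMeasure n ∂μ.toSphere ≤
      κ * ∫⁻ θ : sphere (0 : E) 1,
        ∫⁻ t in Iio (R θ), ENNReal.ofReal (φ (parabolicDist a e (a + t • (θ : E))) ^ p)
          ∂radialMeasure n ∂μ.toSphere := by
  have : Nontrivial E := Module.nontrivial_of_finrank_pos (R := ℝ) (by omega)
  obtain ⟨ρ, hρ, c, hc1, hT⟩ := exists_sphere_add_smul_mem_and_cosSqHalfAngle_lt hE ho hne a he
  obtain ⟨b, hb2, hbΩ⟩ : ∃ b, 2 ≤ b ∧ Ω ⊆ ball a (b * ρ) := by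
    obtain ⟨D, hD⟩ := hb.subset_ball a
    exact ⟨max 2 (D / ρ), le_max_left _ _,
      hD.trans (ball_subset_ball ((div_le_iff₀ hρ).1 (le_max_right _ _)))⟩
  set T := {θ : sphere (0 : E) 1 | a + ρ • (θ : E) ∈ Ω ∧ cosSqHalfAngle e (θ : E) < c}
  have hTo : IsOpen T := (ho.preimage (by fun_prop)).inter
    (isOpen_lt ((continuous_cosSqHalfAngle e).comp continuous_subtype_val) continuous_const)
  have hδ : √c ^ p < 1 := rpow_lt_one (sqrt_nonneg _) (by rwa [sqrt_lt' one_pos, one_pow]) hp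
  obtain ⟨κ, hκ, hgain⟩ := exists_lintegral_mul_le_of_uniform_gain μ.toSphere
    hTo.measurableSet (hTo.measure_pos _ hT).ne' (ENNReal.ofReal_pos.2 (sub_pos.2 hδ)).ne'
    (C := ENNReal.ofReal (b ^ (n + 1))) ENNReal.ofReal_ne_top
  refine ⟨κ, hκ, fun r Λ φ h => hgain _ _
    (∫⁻ t in Iio ρ, ENNReal.ofReal (φ t ^ p) ∂radialMeasure n) ?_ ?_ ?_ ?_⟩
  · exact fun θ => ENNReal.ofReal_le_one.2 (rpow_le_one (sqrt_nonneg _)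
      (sqrt_le_one.2 (cosSqHalfAngle_le_one he (norm_eq_of_mem_sphere θ))) hp.le)
  · intro θ hθ
    rw [← ENNReal.ofReal_add (by positivity) (sub_pos.2 hδ).le, ENNReal.ofReal_le_one]
    linarith [rpow_le_rpow (sqrt_nonneg _) (sqrt_le_sqrt hθ.2.le) hp.le]
  · intro θ
    rcases le_or_gt (R θ) 0 with hθ | hθ
    · rw [setLIntegral_Iio_radialMeasure_of_nonpos _ hθ]
      exact zero_le
    · exact h.setLIntegral_comp_parabolicDist_le hp.le a (norm_eq_of_mem_sphere θ)
        (half_le_cosSqHalfAngle_of_pos hR hhalf hθ) hb2 (le_of_subset_ball hR (by positivity) hbΩ θ)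
  · exact fun θ hθ => h.le_setLIntegral_comp_parabolicDist hp.le a he (norm_eq_of_mem_sphere θ)
      ((hR θ ρ hρ).1 hθ.1).le

end Sphere

/-- On every ray the energy is at most `cos^p (α / 2)` times the mass, so the gain comes from the
rays off the axis. It is uniform in the profile because a fixed open set of these rays carries a
fixed fraction of the mass. -/
theorem exists_lintegral_fderiv_comp_parabolicDist_le [FiniteDimensional ℝ E] [MeasurableSpace E]
    [BorelSpace E] (μ : Measure E) [μ.IsAddHaarMeasure] {p : ℝ} (hp : 0 < p)
    (hE : 1 < finrank ℝ E) (ho : IsOpen Ω) (hb : Bornology.IsBounded Ω) (hc : Convex ℝ Ω)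
    (ha : a ∈ closure Ω) (he : ‖e‖ = 1)
    (hhalf : ∀ x ∈ Ω, 0 ≤ inner ℝ e (x - a)) :
    ∃ κ : ℝ≥0∞, κ < 1 ∧ ∀ r Λ φ, RadialProfile (finrank ℝ E - 1) p r Λ φ →
      ∫⁻ x in Ω, ENNReal.ofReal (‖fderiv ℝ (fun x => φ (parabolicDist a e x)) x‖ ^ p) ∂μ ≤
        κ * (ENNReal.ofReal Λ * ∫⁻ x in Ω, ENNReal.ofReal (φ (parabolicDist a e x) ^ p) ∂μ) := by
  have : Nontrivial E := Module.nontrivial_of_finrank_pos (R := ℝ) (by omega)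
  choose R hR using fun θ : sphere (0 : E) 1 =>
    exists_forall_add_smul_mem_iff_lt hc ho hb ha (norm_eq_of_mem_sphere θ)
  obtain ⟨κ, hκ, hgain⟩ :=
    exists_lintegral_sphere_gain μ hp hE ho hb (closure_nonempty_iff.1 ⟨a, ha⟩) he hR hhalf
      (finrank ℝ E - 1)
  refine ⟨κ, hκ, fun r Λ φ h => ?_⟩
  have hmeas : Measurable fun x => ENNReal.ofReal (φ (parabolicDist a e x) ^ p) :=
    ((h.continuous.comp (lipschitzWith_parabolicDist a he).continuous).measurable.pow_const
      p).ennreal_ofReal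
  rw [setLIntegral_eq_lintegral_sphere_Iio μ ho.measurableSet hR hmeas, mul_left_comm]
  refine (h.setLIntegral_fderiv_comp_parabolicDist_le_lintegral_sphere μ ho hR he hhalf).trans ?_
  gcongr
  exact hgain r Λ φ h

end Cone

section Integrals

open scoped NNReal

variable {E : Type*} [NormedAddCommGroup E] [NormedSpace ℝ E] [FiniteDimensional ℝ E]
  [MeasurableSpace E] [BorelSpace E] {μ : Measure E} {Ω : Set E} {u : E → ℝ}

lemma integrableOn_norm_fderiv_rpow [IsLocallyFiniteMeasure μ] {p : ℝ} (hp : 0 ≤ p)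
    (hb : Bornology.IsBounded Ω) {K : ℝ≥0} (hu : LipschitzWith K u) :
    IntegrableOn (fun x => ‖fderiv ℝ u x‖ ^ p) Ω μ := by
  have := FiniteDimensional.proper_real E
  refine Measure.integrableOn_of_bounded (M := (K : ℝ) ^ p) hb.measure_lt_top.ne
    ((measurable_fderiv ℝ u).norm.pow_const p).aestronglyMeasurable (ae_of_all _ fun x => ?_)
  rw [Real.norm_of_nonneg (by positivity)]
  exact rpow_le_rpow (norm_nonneg _) (norm_fderiv_le_of_lipschitz ℝ hu) hp

lemma integrableOn_of_continuous [IsLocallyFiniteMeasure μ] (hb : Bornology.IsBounded Ω)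
    (hu : Continuous u) : IntegrableOn u Ω μ := by
  have := FiniteDimensional.proper_real E
  exact (hu.continuousOn.integrableOn_compact hb.isCompact_closure).mono_set subset_closure

lemma setIntegral_pos_of_continuous [IsLocallyFiniteMeasure μ] [μ.IsOpenPosMeasure]
    (ho : IsOpen Ω) (hb : Bornology.IsBounded Ω) (hu : Continuous u) (hu0 : ∀ x, 0 ≤ u x)
    (hpos : ∃ x ∈ Ω, 0 < u x) : 0 < ∫ x in Ω, u x ∂μ := by
  obtain ⟨x, hx, hux⟩ := hpos
  rw [setIntegral_pos_iff_support_of_nonneg_ae (ae_of_all _ hu0) (integrableOn_of_continuous hb hu)]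
  exact (hu.isOpen_support.inter ho).measure_pos _ ⟨x, hux.ne', hx⟩

lemma integral_le_mul_integral_of_lintegral_le {α : Type*} [MeasurableSpace α] {μ : Measure α}
    {f g : α → ℝ} (hf : Integrable f μ) (hg : Integrable g μ) (hf0 : ∀ x, 0 ≤ f x)
    (hg0 : ∀ x, 0 ≤ g x) {D : ℝ} (hD : 0 ≤ D)
    (h : ∫⁻ x, ENNReal.ofReal (f x) ∂μ ≤ ENNReal.ofReal D * ∫⁻ x, ENNReal.ofReal (g x) ∂μ) :
    ∫ x, f x ∂μ ≤ D * ∫ x, g x ∂μ := by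
  rwa [← ofReal_integral_eq_lintegral_ofReal hf (ae_of_all _ hf0),
    ← ofReal_integral_eq_lintegral_ofReal hg (ae_of_all _ hg0), ← ENNReal.ofReal_mul hD,
    ENNReal.ofReal_le_ofReal_iff (mul_nonneg hD (integral_nonneg hg0))] at h

end Integrals

section DisjointSupports

open scoped NNReal

lemma abs_rpow_sub_two_mul_self {p : ℝ} (hp : 1 < p) {s : ℝ} (hs : 0 ≤ s) :
    |s| ^ (p - 2) * s = s ^ (p - 1) := by
  rcases hs.eq_or_lt with rfl | hs
  · rw [mul_zero, zero_rpow (by linarith)]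
  · rw [abs_of_pos hs, show p - 1 = p - 2 + 1 by ring, rpow_add_one hs.ne']

section Pointwise

variable {α : Type*} {u v : α → ℝ} {p : ℝ}

lemma eq_zero_or_eq_zero_of_disjoint_support
    (h : Disjoint (Function.support u) (Function.support v)) (x : α) : u x = 0 ∨ v x = 0 := by
  by_contra! hx
  exact h.notMem_of_mem_left hx.1 hx.2

lemma abs_sub_rpow_of_disjoint_support (hp : p ≠ 0) (hu : ∀ x, 0 ≤ u x) (hv : ∀ x, 0 ≤ v x)
    (h : Disjoint (Function.support u) (Function.support v)) (x : α) :
    |u x - v x| ^ p = u x ^ p + v x ^ p := by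
  rcases eq_zero_or_eq_zero_of_disjoint_support h x with h0 | h0 <;>
    simp [h0, abs_of_nonneg, hu x, hv x, zero_rpow hp]

lemma abs_sub_rpow_mul_sub_of_disjoint_support (hp : 1 < p) (hu : ∀ x, 0 ≤ u x)
    (hv : ∀ x, 0 ≤ v x) (h : Disjoint (Function.support u) (Function.support v)) (x : α) :
    |u x - v x| ^ (p - 2) * (u x - v x) = u x ^ (p - 1) - v x ^ (p - 1) := by
  have hp' : p - 1 ≠ 0 := by linarith
  rcases eq_zero_or_eq_zero_of_disjoint_support h x with h0 | h0
  · rw [h0, zero_sub, abs_neg, mul_neg, abs_rpow_sub_two_mul_self hp (hv x), zero_rpow hp',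
      zero_sub]
  · rw [h0, sub_zero, abs_rpow_sub_two_mul_self hp (hu x), zero_rpow hp', sub_zero]

end Pointwise

lemma norm_fderiv_sub_rpow_of_disjoint_tsupport {E : Type*} [NormedAddCommGroup E]
    [NormedSpace ℝ E] {u v : E → ℝ} {p : ℝ} (hp : p ≠ 0)
    (h : Disjoint (tsupport u) (tsupport v)) (x : E) :
    ‖fderiv ℝ (fun y => u y - v y) x‖ ^ p = ‖fderiv ℝ u x‖ ^ p + ‖fderiv ℝ v x‖ ^ p := by
  by_cases hx : x ∈ tsupport u
  · have hv := h.notMem_of_mem_left hx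
    have heq : (fun y => u y - v y) =ᶠ[nhds x] u := by
      filter_upwards [notMem_tsupport_iff_eventuallyEq.1 hv] with y hy
      simp [hy]
    rw [heq.fderiv_eq, fderiv_of_notMem_tsupport ℝ hv, norm_zero, zero_rpow hp, add_zero]
  · have heq : (fun y => u y - v y) =ᶠ[nhds x] -v := by
      filter_upwards [notMem_tsupport_iff_eventuallyEq.1 hx] with y hy
      simp [hy]
    rw [heq.fderiv_eq, fderiv_neg, norm_neg, fderiv_of_notMem_tsupport ℝ hx, norm_zero,
      zero_rpow hp, zero_add]

variable {N : ℕ} {Ω : Set (EuclideanSpace ℝ (Fin N))} {p D : ℝ}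
  {u v : EuclideanSpace ℝ (Fin N) → ℝ} {K L : ℝ≥0}

lemma rayleighQuot_nonneg (p q : ℝ) (Ω : Set (EuclideanSpace ℝ (Fin N)))
    (v : EuclideanSpace ℝ (Fin N) → ℝ) : 0 ≤ rayleighQuot p q Ω v := by
  unfold rayleighQuot
  positivity

lemma muPQ_le_rayleighQuot {q : ℝ} (hv : LipschitzOnWith K v (closure Ω)) (hne : ∃ x ∈ Ω, v x ≠ 0)
    (hmean : ∫ x in Ω, |v x| ^ (q - 2) * v x = 0) : muPQ p q Ω ≤ rayleighQuot p q Ω v := by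
  refine csInf_le ⟨0, ?_⟩ ⟨v, K, hv, hne, hmean, rfl⟩
  rintro _ ⟨w, _, _, _, _, rfl⟩
  exact rayleighQuot_nonneg p q Ω w

lemma muPQ_le_of_disjoint_tsupport_of_integral_eq (hp : 1 < p) (ho : IsOpen Ω)
    (hb : Bornology.IsBounded Ω) (hu : LipschitzWith K u) (hv : LipschitzWith L v)
    (hu0 : ∀ x, 0 ≤ u x) (hv0 : ∀ x, 0 ≤ v x) (hupos : ∃ x ∈ Ω, 0 < u x)
    (hdisj : Disjoint (tsupport u) (tsupport v))
    (hDu : ∫ x in Ω, ‖fderiv ℝ u x‖ ^ p ≤ D * ∫ x in Ω, u x ^ p)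
    (hDv : ∫ x in Ω, ‖fderiv ℝ v x‖ ^ p ≤ D * ∫ x in Ω, v x ^ p)
    (heq : ∫ x in Ω, u x ^ (p - 1) = ∫ x in Ω, v x ^ (p - 1)) : muPQ p p Ω ≤ D := by
  have hp0 : 0 < p := one_pos.trans hp
  have hsupp := hdisj.mono (subset_tsupport u) (subset_tsupport v)
  have hint {w : EuclideanSpace ℝ (Fin N) → ℝ} (hw : Continuous w) {q : ℝ} (hq : 0 ≤ q) :
      IntegrableOn (fun x => w x ^ q) Ω :=
    integrableOn_of_continuous hb (hw.rpow_const fun _ => .inr hq)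
  have hmass : 0 < ∫ x in Ω, u x ^ p :=
    setIntegral_pos_of_continuous ho hb (hu.continuous.rpow_const fun _ => .inr hp0.le)
      (fun x => rpow_nonneg (hu0 x) p)
      (hupos.imp fun x hx => ⟨hx.1, rpow_pos_of_pos hx.2 p⟩)
  refine (muPQ_le_rayleighQuot (hu.sub hv).lipschitzOnWith ?_ ?_).trans ?_
  · obtain ⟨x, hx, hux⟩ := hupos
    refine ⟨x, hx, ?_⟩
    rw [(eq_zero_or_eq_zero_of_disjoint_support hsupp x).resolve_left hux.ne', sub_zero]
    exact hux.ne'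
  · simp only [abs_sub_rpow_mul_sub_of_disjoint_support hp hu0 hv0 hsupp]
    rw [integral_sub (hint hu.continuous (by linarith)) (hint hv.continuous (by linarith)), heq,
      sub_self]
  · simp only [rayleighQuot, div_self hp0.ne', rpow_one,
      norm_fderiv_sub_rpow_of_disjoint_tsupport hp0.ne' hdisj,
      abs_sub_rpow_of_disjoint_support hp0.ne' hu0 hv0 hsupp]
    rw [integral_add (integrableOn_norm_fderiv_rpow hp0.le hb hu)
        (integrableOn_norm_fderiv_rpow hp0.le hb hv),
      integral_add (hint hu.continuous hp0.le) (hint hv.continuous hp0.le), div_le_iff₀, mul_add]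
    · exact add_le_add hDu hDv
    · exact add_pos_of_pos_of_nonneg hmass (integral_nonneg fun x => rpow_nonneg (hv0 x) p)

theorem muPQ_le_of_disjoint_tsupport (hp : 1 < p) (ho : IsOpen Ω)
    (hb : Bornology.IsBounded Ω) (hu : LipschitzWith K u) (hv : LipschitzWith L v)
    (hu0 : ∀ x, 0 ≤ u x) (hv0 : ∀ x, 0 ≤ v x) (hupos : ∃ x ∈ Ω, 0 < u x)
    (hvpos : ∃ x ∈ Ω, 0 < v x) (hdisj : Disjoint (tsupport u) (tsupport v))
    (hDu : ∫ x in Ω, ‖fderiv ℝ u x‖ ^ p ≤ D * ∫ x in Ω, u x ^ p)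
    (hDv : ∫ x in Ω, ‖fderiv ℝ v x‖ ^ p ≤ D * ∫ x in Ω, v x ^ p) : muPQ p p Ω ≤ D := by
  have hp1 : 0 < p - 1 := sub_pos.2 hp
  have hmoment {w : EuclideanSpace ℝ (Fin N) → ℝ} (hw : Continuous w) (hw0 : ∀ x, 0 ≤ w x)
      (hpos : ∃ x ∈ Ω, 0 < w x) : 0 < ∫ x in Ω, w x ^ (p - 1) :=
    setIntegral_pos_of_continuous ho hb (hw.rpow_const fun _ => .inr hp1.le)
      (fun x => rpow_nonneg (hw0 x) _) (hpos.imp fun x hx => ⟨hx.1, rpow_pos_of_pos hx.2 _⟩)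
  have hmu := hmoment hu.continuous hu0 hupos
  have hmv := hmoment hv.continuous hv0 hvpos
  obtain ⟨t, ht, hteq⟩ : ∃ t : ℝ, 0 < t ∧
      t ^ (p - 1) * ∫ x in Ω, v x ^ (p - 1) = ∫ x in Ω, u x ^ (p - 1) := by
    refine ⟨((∫ x in Ω, u x ^ (p - 1)) / ∫ x in Ω, v x ^ (p - 1)) ^ (p - 1)⁻¹, by positivity, ?_⟩
    rw [rpow_inv_rpow (by positivity) hp1.ne', div_mul_cancel₀ _ hmv.ne']
  have hpow (q : ℝ) : (fun x => (t * v x) ^ q) = fun x => t ^ q * v x ^ q :=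
    funext fun x => mul_rpow ht.le (hv0 x)
  have hfderiv (x : EuclideanSpace ℝ (Fin N)) :
      fderiv ℝ (fun y => t * v y) x = t • fderiv ℝ v x :=
    congr_fun (fderiv_const_smul_field (f := v) t) x
  refine muPQ_le_of_disjoint_tsupport_of_integral_eq hp ho hb hu
    ((lipschitzWith_smul t).comp hv) hu0 (fun x => mul_nonneg ht.le (hv0 x)) hupos
    (hdisj.mono_right (closure_mono (Function.support_mul_subset_right _ _))) hDu ?_ ?_
  · simp only [Function.comp_def, smul_eq_mul, hpow, hfderiv, norm_smul,
      Real.norm_of_nonneg ht.le, mul_rpow ht.le (norm_nonneg _), integral_const_mul]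
    rw [mul_left_comm]
    gcongr
  · simp only [Function.comp_def, smul_eq_mul, hpow, integral_const_mul, hteq]

end DisjointSupports

section Diameter

lemma exists_dist_eq_diam_of_isCompact {X : Type*} [PseudoMetricSpace X] {s : Set X}
    (hs : IsCompact s) (hne : s.Nonempty) : ∃ x ∈ s, ∃ y ∈ s, dist x y = diam s := by
  obtain ⟨⟨x, y⟩, ⟨hx, hy⟩, hmax⟩ :=
    (hs.prod hs).exists_isMaxOn (hne.prod hne) continuous_dist.continuousOn
  refine ⟨x, hx, y, hy, (dist_le_diam_of_mem hs.isBounded hx hy).antisymm ?_⟩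
  exact diam_le_of_forall_dist_le dist_nonneg fun a ha b hb => hmax (mk_mem_prod ha hb)

lemma diam_pos_of_isOpen {E : Type*} [NormedAddCommGroup E] [NormedSpace ℝ E] [Nontrivial E]
    {s : Set E} (ho : IsOpen s) (hb : Bornology.IsBounded s) (hne : s.Nonempty) : 0 < diam s := by
  obtain ⟨x, hx⟩ := hne
  have := Module.punctured_nhds_neBot ℝ E x
  exact diam_pos (infinite_of_mem_nhds x (ho.mem_nhds hx)).nontrivial hb

lemma inner_sub_sub_nonneg_of_dist_le {E : Type*} [NormedAddCommGroup E] [InnerProductSpace ℝ E]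
    {x y z : E} (h : dist z y ≤ dist x y) : 0 ≤ inner ℝ (y - x) (z - x) := by
  have hsq := norm_sub_sq_real (z - x) (y - x)
  rw [sub_sub_sub_cancel_right, real_inner_comm] at hsq
  rw [dist_eq_norm, dist_comm, dist_eq_norm] at h
  have : ‖z - y‖ ^ 2 ≤ ‖y - x‖ ^ 2 := by gcongr
  linarith [sq_nonneg ‖z - x‖]

end Diameter

section TestFunctions

open scoped NNReal

variable {E : Type*} [NormedAddCommGroup E] [InnerProductSpace ℝ E] {Ω : Set E} {a e : E} {n : ℕ}
  {p r Λ : ℝ} {φ : ℝ → ℝ}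

lemma exists_lipschitzWith_comp_parabolicDist (h : RadialProfile n p r Λ φ) (a : E)
    (he : ‖e‖ = 1) : ∃ K, LipschitzWith K fun x => φ (parabolicDist a e x) := by
  obtain ⟨K, hK⟩ := h.exists_lipschitz
  exact ⟨K * 1, hK.comp (lipschitzWith_parabolicDist a he)⟩

lemma tsupport_comp_parabolicDist_subset (h : RadialProfile n p r Λ φ) (a : E) (he : ‖e‖ = 1) :
    tsupport (fun x => φ (parabolicDist a e x)) ⊆ {x | inner ℝ e (x - a) < r} := fun x hx =>
  (inner_le_parabolicDist a x he).trans_lt <| h.tsupport_subset <|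
    tsupport_comp_subset_preimage φ (lipschitzWith_parabolicDist a he).continuous hx

lemma exists_comp_parabolicDist_pos (h : RadialProfile n p r Λ φ) (ha : a ∈ closure Ω)
    (he : ‖e‖ = 1) : ∃ x ∈ Ω, 0 < φ (parabolicDist a e x) := by
  obtain ⟨K, hK⟩ := exists_lipschitzWith_comp_parabolicDist h a he
  have hopen : IsOpen {x | 0 < φ (parabolicDist a e x)} :=
    isOpen_lt continuous_const hK.continuous
  have hmem : a ∈ {x | 0 < φ (parabolicDist a e x)} := by
    simpa [parabolicDist] using h.pos_zero
  obtain ⟨x, hx, hxΩ⟩ := mem_closure_iff.1 ha _ hopen hmem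
  exact ⟨x, hxΩ, hx⟩

theorem exists_integral_fderiv_comp_parabolicDist_le [FiniteDimensional ℝ E] [MeasurableSpace E]
    [BorelSpace E] (μ : Measure E) [μ.IsAddHaarMeasure] (hp : 0 < p)
    (hE : 1 < Module.finrank ℝ E) (ho : IsOpen Ω) (hb : Bornology.IsBounded Ω) (hc : Convex ℝ Ω)
    (ha : a ∈ closure Ω) (he : ‖e‖ = 1) (hhalf : ∀ x ∈ Ω, 0 ≤ inner ℝ e (x - a)) :
    ∃ κ : ℝ≥0, κ < 1 ∧ ∀ r Λ φ, 0 ≤ Λ → RadialProfile (Module.finrank ℝ E - 1) p r Λ φ →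
      ∫ x in Ω, ‖fderiv ℝ (fun x => φ (parabolicDist a e x)) x‖ ^ p ∂μ ≤
        κ * Λ * ∫ x in Ω, φ (parabolicDist a e x) ^ p ∂μ := by
  obtain ⟨κ, hκ, h⟩ :=
    exists_lintegral_fderiv_comp_parabolicDist_le μ hp hE ho hb hc ha he hhalf
  lift κ to ℝ≥0 using hκ.ne_top
  refine ⟨κ, by exact_mod_cast hκ, fun r Λ φ hΛ hφ => ?_⟩
  obtain ⟨K, hK⟩ := exists_lipschitzWith_comp_parabolicDist hφ a he
  refine integral_le_mul_integral_of_lintegral_le (integrableOn_norm_fderiv_rpow hp.le hb hK)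
    (integrableOn_of_continuous hb (hK.continuous.rpow_const fun _ => .inr hp.le))
    (fun x => by positivity) (fun x => rpow_nonneg (hφ.nonneg _) p) (by positivity) ?_
  rw [ENNReal.ofReal_mul κ.coe_nonneg, ENNReal.ofReal_coe_nnreal, mul_assoc]
  exact h r Λ φ hφ

lemma norm_inv_dist_smul_sub {x y : E} (h : x ≠ y) : ‖(dist x y)⁻¹ • (y - x)‖ = 1 := by
  rw [norm_smul, norm_inv, Real.norm_of_nonneg dist_nonneg, ← dist_eq_norm, dist_comm y x,
    inv_mul_cancel₀ (dist_ne_zero.2 h)]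

lemma inner_inv_dist_smul_add_inner (x y z : E) :
    inner ℝ ((dist x y)⁻¹ • (y - x)) (z - x) + inner ℝ ((dist y x)⁻¹ • (x - y)) (z - y) =
      dist x y := by
  have hsub : z - x = (y - x) + (z - y) := by abel
  rw [hsub, dist_comm y x, ← neg_sub y x, smul_neg, inner_neg_left, inner_add_right,
    add_neg_cancel_right, real_inner_smul_left, real_inner_self_eq_norm_sq, ← dist_eq_norm,
    dist_comm y x, sq, ← mul_assoc, inv_mul_mul_self]

lemma disjoint_tsupport_comp_parabolicDist {x y : E} (h : RadialProfile n p (dist x y / 2) Λ φ)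
    (hxy : x ≠ y) :
    Disjoint (tsupport fun z => φ (parabolicDist x ((dist x y)⁻¹ • (y - x)) z))
      (tsupport fun z => φ (parabolicDist y ((dist y x)⁻¹ • (x - y)) z)) := by
  rw [disjoint_left]
  intro z hzx hzy
  have hx := tsupport_comp_parabolicDist_subset h x (norm_inv_dist_smul_sub hxy) hzx
  have hy := tsupport_comp_parabolicDist_subset h y (norm_inv_dist_smul_sub hxy.symm) hzy
  rw [mem_ofPred_eq] at hx hy
  linarith [inner_inv_dist_smul_add_inner x y z]

variable {N : ℕ}

lemma exists_integral_fderiv_comp_parabolicDist_le_of_dist_eq_diam (hN : 2 ≤ N) (hp : 0 < p)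
    {Ω : Set (EuclideanSpace ℝ (Fin N))} (ho : IsOpen Ω) (hb : Bornology.IsBounded Ω)
    (hc : Convex ℝ Ω) {x y : EuclideanSpace ℝ (Fin N)} (hx : x ∈ closure Ω) (hy : y ∈ closure Ω)
    (hxy : dist x y = diam Ω) (hne : x ≠ y) :
    ∃ κ : ℝ≥0, κ < 1 ∧ ∀ r Λ φ, 0 ≤ Λ → RadialProfile (N - 1) p r Λ φ →
      ∫ z in Ω, ‖fderiv ℝ (fun z => φ (parabolicDist x ((dist x y)⁻¹ • (y - x)) z)) z‖ ^ p ≤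
        κ * Λ * ∫ z in Ω, φ (parabolicDist x ((dist x y)⁻¹ • (y - x)) z) ^ p := by
  have hfin : Module.finrank ℝ (EuclideanSpace ℝ (Fin N)) = N := finrank_euclideanSpace_fin
  have h := exists_integral_fderiv_comp_parabolicDist_le volume hp (by omega) ho hb hc hx
    (norm_inv_dist_smul_sub hne) fun z hz => ?_
  · simpa only [hfin] using h
  · rw [real_inner_smul_left]
    refine mul_nonneg (by positivity) (inner_sub_sub_nonneg_of_dist_le ?_)
    rw [hxy, ← diam_closure]
    exact dist_le_diam_of_mem hb.closure (subset_closure hz) hy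

/-- The test function is the difference of `φ` composed with the parabolic distances to the two
endpoints of a diameter. Their supports are separated by the hyperplane bisecting that diameter. -/
theorem exists_muPQ_le_mul_of_radialProfile (hN : 2 ≤ N) (hp : 1 < p)
    {Ω : Set (EuclideanSpace ℝ (Fin N))} (ho : IsOpen Ω) (hb : Bornology.IsBounded Ω)
    (hc : Convex ℝ Ω) (hne : Ω.Nonempty) :
    ∃ κ : ℝ≥0, κ < 1 ∧ ∀ Λ φ, 0 ≤ Λ → RadialProfile (N - 1) p (diam Ω / 2) Λ φ →
      muPQ p p Ω ≤ κ * Λ := by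
  have hp0 : 0 < p := one_pos.trans hp
  have : Nontrivial (Fin N) := Fin.nontrivial_iff_two_le.2 hN
  obtain ⟨x, hx, y, hy, hdiam⟩ := exists_dist_eq_diam_of_isCompact hb.isCompact_closure hne.closure
  rw [diam_closure] at hdiam
  have hxy : x ≠ y := dist_pos.1 (hdiam ▸ diam_pos_of_isOpen ho hb hne)
  obtain ⟨κ, hκ, hx_le⟩ :=
    exists_integral_fderiv_comp_parabolicDist_le_of_dist_eq_diam hN hp0 ho hb hc hx hy hdiam hxy
  obtain ⟨κ', hκ', hy_le⟩ :=
    exists_integral_fderiv_comp_parabolicDist_le_of_dist_eq_diam hN hp0 ho hb hc hy hx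
      (dist_comm y x ▸ hdiam) hxy.symm
  refine ⟨max κ κ', max_lt hκ hκ', fun Λ φ hΛ hφ => ?_⟩
  rw [← hdiam] at hφ
  have hex := norm_inv_dist_smul_sub hxy
  have hey := norm_inv_dist_smul_sub hxy.symm
  obtain ⟨K, hK⟩ := exists_lipschitzWith_comp_parabolicDist hφ x hex
  obtain ⟨L, hL⟩ := exists_lipschitzWith_comp_parabolicDist hφ y hey
  have hint (a e : EuclideanSpace ℝ (Fin N)) :
      0 ≤ ∫ z in Ω, φ (parabolicDist a e z) ^ p :=
    integral_nonneg fun z => rpow_nonneg (hφ.nonneg _) p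
  refine muPQ_le_of_disjoint_tsupport hp ho hb hK hL (fun _ => hφ.nonneg _) (fun _ => hφ.nonneg _)
    (exists_comp_parabolicDist_pos hφ hx hex) (exists_comp_parabolicDist_pos hφ hy hey)
    (disjoint_tsupport_comp_parabolicDist hφ hxy) ((hx_le _ _ _ hΛ hφ).trans ?_)
    ((hy_le _ _ _ hΛ hφ).trans ?_)
  · exact mul_le_mul_of_nonneg_right (by gcongr; exact le_max_left κ κ') (hint _ _)
  · exact mul_le_mul_of_nonneg_right (by gcongr; exact le_max_right κ κ') (hint _ _)

end TestFunctions

section Poincare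

open scoped NNReal

lemma exists_le_le_sobolevConjugate {n p : ℝ≥0} (hn : 1 < n) (hp : 1 ≤ p) :
    ∃ q : ℝ≥0, 1 ≤ q ∧ q < n ∧ q ≤ p ∧ (q : ℝ)⁻¹ - (n : ℝ)⁻¹ ≤ (p : ℝ)⁻¹ := by
  refine ⟨(min 1 (p⁻¹ + n⁻¹))⁻¹, (one_le_inv₀ (by positivity)).2 (min_le_left _ _), ?_, ?_, ?_⟩
  · exact inv_lt_of_inv_lt₀ (by positivity) <|
      lt_min (inv_lt_one_of_one_lt₀ hn) (lt_add_of_pos_left _ (by positivity))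
  · exact inv_le_of_inv_le₀ (by positivity) <| le_min (inv_le_one_of_one_le₀ hp) le_self_add
  · rw [sub_le_iff_le_add]
    exact_mod_cast (inv_inv _).trans_le (min_le_right 1 (p⁻¹ + n⁻¹))

variable {E : Type*} [NormedAddCommGroup E] [MeasurableSpace E] [BorelSpace E] {μ : Measure E}
  {v : E → ℝ} {p : ℝ} {Ω : Set E}

lemma integrable_abs_rpow [IsFiniteMeasureOnCompacts μ] (hp : 0 < p) (hv : Continuous v)
    (hvc : HasCompactSupport v) : Integrable (fun x => |v x| ^ p) μ :=
  (hv.abs.rpow_const fun _ => .inr hp.le).integrable_of_hasCompactSupport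
    (hvc.comp_left (g := fun t => |t| ^ p) (by simp [hp.ne']))

variable [NormedSpace ℝ E]

lemma integrable_norm_fderiv_rpow [IsFiniteMeasureOnCompacts μ] (hp : 0 < p)
    (hv : ContDiff ℝ 1 v) (hvc : HasCompactSupport v) :
    Integrable (fun x => ‖fderiv ℝ v x‖ ^ p) μ :=
  ((hv.continuous_fderiv one_ne_zero).norm.rpow_const
    fun _ => .inr hp.le).integrable_of_hasCompactSupport
      ((hvc.fderiv ℝ).norm.comp_left (g := fun t => t ^ p) (zero_rpow hp.ne'))

variable [FiniteDimensional ℝ E] (μ) [μ.IsAddHaarMeasure]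

theorem exists_eLpNorm_le_mul_eLpNorm_fderiv (hE : 1 < Module.finrank ℝ E) {p : ℝ≥0} (hp : 1 ≤ p)
    (hb : Bornology.IsBounded Ω) :
    ∃ C : ℝ≥0, ∀ v : E → ℝ, ContDiff ℝ 1 v → tsupport v ⊆ Ω →
      eLpNorm v p μ ≤ C * eLpNorm (fderiv ℝ v) p μ := by
  have := FiniteDimensional.proper_real E
  obtain ⟨q, hq, hqn, hqp, hpq⟩ :=
    exists_le_le_sobolevConjugate (n := Module.finrank ℝ E) (by exact_mod_cast hE) hp
  set S : ℝ≥0 := eLpNormLESNormFDerivOfLeConst ℝ μ Ω q p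
  set M := μ Ω ^ (1 / (q : ℝ) - 1 / (p : ℝ))
  have hM : M ≠ ⊤ := by
    refine ENNReal.rpow_ne_top_of_nonneg ?_ hb.measure_lt_top.ne
    exact sub_nonneg.2 (one_div_le_one_div_of_le (by positivity) hqp)
  refine ⟨S * M.toNNReal, fun v hv hvΩ => ?_⟩
  have hrestrict (s : ENNReal) :
      eLpNorm (fderiv ℝ v) s (μ.restrict Ω) = eLpNorm (fderiv ℝ v) s μ := by
    rw [← eLpNorm_norm, ← eLpNorm_norm (fderiv ℝ v)]
    exact eLpNorm_restrict_eq_of_support_subset <|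
      (Function.support_comp_subset norm_zero _).trans <|
      (support_fderiv_subset ℝ).trans hvΩ
  calc eLpNorm v p μ ≤ S * eLpNorm (fderiv ℝ v) q μ :=
        eLpNorm_le_eLpNorm_fderiv_of_le μ hv ((subset_tsupport v).trans hvΩ) hq hqn hpq hb
    _ ≤ S * (eLpNorm (fderiv ℝ v) p μ * M) := by
        gcongr
        simpa only [hrestrict, Measure.restrict_apply_univ, ENNReal.coe_toReal] using
          eLpNorm_le_eLpNorm_mul_rpow_measure_univ (ENNReal.coe_le_coe.2 hqp)
            (measurable_fderiv ℝ v).aestronglyMeasurable (μ := μ.restrict Ω)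
    _ = ↑(S * M.toNNReal) * eLpNorm (fderiv ℝ v) p μ := by
        rw [ENNReal.coe_mul, ENNReal.coe_toNNReal hM, mul_comm (eLpNorm _ _ _), mul_assoc]

lemma ofReal_norm_rpow {F : Type*} [SeminormedAddCommGroup F] (hp : 0 ≤ p) (x : F) :
    ENNReal.ofReal (‖x‖ ^ p) = ‖x‖ₑ ^ p := by
  rw [← ENNReal.ofReal_rpow_of_nonneg (norm_nonneg x) hp, ofReal_norm]

theorem exists_integral_abs_rpow_le (hE : 1 < Module.finrank ℝ E) (hp : 1 ≤ p)
    (hb : Bornology.IsBounded Ω) :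
    ∃ C : ℝ, 0 < C ∧ ∀ v : E → ℝ, ContDiff ℝ 1 v → HasCompactSupport v → tsupport v ⊆ Ω →
      ∫ x, |v x| ^ p ∂μ ≤ C * ∫ x, ‖fderiv ℝ v x‖ ^ p ∂μ := by
  have hp0 : 0 < p := one_pos.trans_le hp
  lift p to ℝ≥0 using hp0.le
  have hp_ne : p ≠ 0 := by exact_mod_cast hp0.ne'
  obtain ⟨C, hC⟩ := exists_eLpNorm_le_mul_eLpNorm_fderiv μ hE (p := p) (by exact_mod_cast hp) hb
  refine ⟨(C + 1 : ℝ≥0) ^ (p : ℝ), by positivity, fun v hv hvc hvΩ => ?_⟩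
  refine integral_le_mul_integral_of_lintegral_le (integrable_abs_rpow hp0 hv.continuous hvc)
    (integrable_norm_fderiv_rpow hp0 hv hvc) (fun x => by positivity) (fun x => by positivity)
    (by positivity) ?_
  calc ∫⁻ x, ENNReal.ofReal (|v x| ^ (p : ℝ)) ∂μ = eLpNorm v p μ ^ (p : ℝ) := by
        simp only [← Real.norm_eq_abs, ofReal_norm_rpow hp0.le,
          eLpNorm_nnreal_pow_eq_lintegral hp_ne]
    _ ≤ ((C + 1 : ℝ≥0) * eLpNorm (fderiv ℝ v) p μ) ^ (p : ℝ) := by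
        gcongr
        exact (hC v hv hvΩ).trans (by gcongr; exact le_self_add)
    _ = _ := by
        rw [ENNReal.mul_rpow_of_nonneg _ _ hp0.le, eLpNorm_nnreal_pow_eq_lintegral hp_ne,
          ← ENNReal.ofReal_coe_nnreal, ENNReal.ofReal_rpow_of_nonneg (by positivity) hp0.le]
        simp only [ofReal_norm_rpow hp0.le]

end Poincare

section DirichletEigenvalue

variable {N : ℕ} {p Λ : ℝ} {Ω : Set (EuclideanSpace ℝ (Fin N))}
  {v : EuclideanSpace ℝ (Fin N) → ℝ}

lemma rayleighQuot_eq_of_tsupport_subset (hp : 0 < p) (hvΩ : tsupport v ⊆ Ω) :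
    rayleighQuot p p Ω v = (∫ x, ‖fderiv ℝ v x‖ ^ p) / ∫ x, |v x| ^ p := by
  rw [rayleighQuot, div_self hp.ne', rpow_one,
    setIntegral_eq_integral_of_forall_compl_eq_zero fun x hx => ?_,
    setIntegral_eq_integral_of_forall_compl_eq_zero fun x hx => ?_]
  · rw [image_eq_zero_of_notMem_tsupport fun h => hx (hvΩ h), abs_zero, zero_rpow hp.ne']
  · rw [fderiv_of_notMem_tsupport ℝ fun h => hx (hvΩ h), norm_zero, zero_rpow hp.ne']

lemma integral_abs_rpow_pos {E : Type*} [NormedAddCommGroup E] [MeasurableSpace E] [BorelSpace E]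
    {μ : Measure E} [IsFiniteMeasureOnCompacts μ] [μ.IsOpenPosMeasure] {v : E → ℝ} {p : ℝ}
    (hp : 0 < p) (hv : Continuous v) (hvc : HasCompactSupport v) (hne : ∃ x, v x ≠ 0) :
    0 < ∫ x, |v x| ^ p ∂μ := by
  obtain ⟨x, hx⟩ := hne
  exact (hv.abs.rpow_const fun _ => .inr hp.le).integral_pos_of_hasCompactSupport_nonneg_nonzero
    (hvc.comp_left (g := fun t => |t| ^ p) (by simp [hp.ne']))
    (fun x => rpow_nonneg (abs_nonneg _) p)
    (rpow_pos_of_pos (abs_pos.2 hx) p).ne'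

lemma exists_rayleighQuot_lt_of_lambdaPQ_lt {q : ℝ} (ho : IsOpen Ω) (hne : Ω.Nonempty)
    (h : lambdaPQ p q Ω < Λ) :
    ∃ v : EuclideanSpace ℝ (Fin N) → ℝ, ContDiff ℝ (⊤ : ℕ∞) v ∧ HasCompactSupport v ∧
      tsupport v ⊆ Ω ∧ (∃ x ∈ Ω, v x ≠ 0) ∧ rayleighQuot p q Ω v < Λ := by
  obtain ⟨x, hx⟩ := hne
  obtain ⟨u, huΩ, huc, hu, -, hux⟩ := exists_contDiff_tsupport_subset (n := ⊤) (ho.mem_nhds hx)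
  obtain ⟨_, ⟨v, hv, hvc, hvΩ, hv0, rfl⟩, hlt⟩ := exists_lt_of_csInf_lt
    (by exact ⟨_, u, hu, huc, huΩ, ⟨x, hx, by simp [hux]⟩, rfl⟩) h
  exact ⟨v, hv, hvc, hvΩ, hv0, hlt⟩

lemma lambdaPQ_nonneg (p q : ℝ) (Ω : Set (EuclideanSpace ℝ (Fin N))) : 0 ≤ lambdaPQ p q Ω := by
  refine Real.sInf_nonneg ?_
  rintro _ ⟨v, -, -, -, -, rfl⟩
  exact rayleighQuot_nonneg p q Ω v

theorem lambdaPQ_pos (hN : 2 ≤ N) (hp : 1 ≤ p) (ho : IsOpen Ω) (hb : Bornology.IsBounded Ω)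
    (hne : Ω.Nonempty) : 0 < lambdaPQ p p Ω := by
  have hp0 : 0 < p := one_pos.trans_le hp
  obtain ⟨C, hC, hpoincare⟩ := exists_integral_abs_rpow_le
    (volume : Measure (EuclideanSpace ℝ (Fin N))) (by rw [finrank_euclideanSpace_fin]; omega) hp hb
  refine (inv_pos.2 hC).trans_le (le_of_not_gt fun hlt => ?_)
  obtain ⟨v, hv, hvc, hvΩ, ⟨x, -, hx⟩, hvlt⟩ := exists_rayleighQuot_lt_of_lambdaPQ_lt ho hne hlt
  have hv1 : ContDiff ℝ 1 v := hv.of_le (by exact_mod_cast le_top)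
  rw [rayleighQuot_eq_of_tsupport_subset hp0 hvΩ,
    div_lt_iff₀ (integral_abs_rpow_pos hp0 hv.continuous hvc ⟨x, hx⟩), lt_inv_mul_iff₀ hC] at hvlt
  exact hvlt.not_ge (hpoincare v hv1 hvc hvΩ)

theorem exists_radialProfile_of_lambdaPQ_ball_lt (hN : 1 ≤ N) (hp : 0 < p)
    {c : EuclideanSpace ℝ (Fin N)} {r : ℝ} (hr : 0 < r) (h : lambdaPQ p p (ball c r) < Λ) :
    ∃ φ, RadialProfile (N - 1) p r Λ φ := by
  have : Nonempty (Fin N) := Fin.pos_iff_nonempty.1 hN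
  have hΛ : 0 ≤ Λ := (lambdaPQ_nonneg p p _).trans h.le
  obtain ⟨v, hv, hvc, hvΩ, ⟨x, -, hx⟩, hvlt⟩ :=
    exists_rayleighQuot_lt_of_lambdaPQ_lt isOpen_ball (nonempty_ball.2 hr) h
  have hv1 : ContDiff ℝ 1 v := hv.of_le (by exact_mod_cast le_top)
  have hmass := integral_abs_rpow_pos (μ := volume) hp hv.continuous hvc ⟨x, hx⟩
  rw [rayleighQuot_eq_of_tsupport_subset hp hvΩ, div_lt_iff₀ hmass] at hvlt
  have hfin : Module.finrank ℝ (EuclideanSpace ℝ (Fin N)) = N := finrank_euclideanSpace_fin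
  rw [← hfin]
  refine exists_radialProfile_of_lintegral_fderiv_lt volume hp hr hΛ hv1 hvc hvΩ ?_
  rw [← ofReal_integral_eq_lintegral_ofReal (integrable_norm_fderiv_rpow hp hv1 hvc)
      (ae_of_all _ fun x => by positivity),
    ← ofReal_integral_eq_lintegral_ofReal (integrable_abs_rpow hp hv.continuous hvc)
      (ae_of_all _ fun x => by positivity), ← ENNReal.ofReal_mul hΛ]
  exact ENNReal.ofReal_lt_ofReal_iff'.2 ⟨hvlt, lt_of_le_of_lt (by positivity) hvlt⟩

end DirichletEigenvalue

section Comparison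

variable {N : ℕ} {p : ℝ} {Ω : Set (EuclideanSpace ℝ (Fin N))}

theorem muPQ_lt_lambdaPQ_ball_mul_div_diam (hN : 2 ≤ N) (hp : 1 < p) (ho : IsOpen Ω)
    (hb : Bornology.IsBounded Ω) (hc : Convex ℝ Ω) (hne : Ω.Nonempty)
    (c : EuclideanSpace ℝ (Fin N)) {r : ℝ} (hr : 0 < r) :
    muPQ p p Ω < lambdaPQ p p (ball c r) * (r / (diam Ω / 2)) ^ p := by
  have : Nontrivial (Fin N) := Fin.nontrivial_iff_two_le.2 hN
  have hdiam : 0 < diam Ω := diam_pos_of_isOpen ho hb hne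
  obtain ⟨κ, hκ, hmu⟩ := exists_muPQ_le_mul_of_radialProfile hN hp ho hb hc hne
  set b := r / (diam Ω / 2)
  have hb0 : 0 < b := by positivity
  set lam := lambdaPQ p p (ball c r)
  have hlam : 0 < lam :=
    lambdaPQ_pos hN hp.le isOpen_ball isBounded_ball (nonempty_ball.2 hr)
  have hΛ : ∀ Λ > lam, muPQ p p Ω ≤ κ * (b ^ p * Λ) := fun Λ hΛ => by
    obtain ⟨φ, hφ⟩ :=
      exists_radialProfile_of_lambdaPQ_ball_lt (by omega) (one_pos.trans hp) hr hΛ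
    have hrb : r / b = diam Ω / 2 := div_div_cancel₀ hr.ne'
    exact hmu _ _ (mul_nonneg (by positivity) (hlam.trans hΛ).le) (hrb ▸ hφ.comp_mul hb0)
  have hcont : Continuous fun Λ : ℝ => κ * (b ^ p * Λ) := by fun_prop
  calc muPQ p p Ω ≤ κ * (b ^ p * lam) :=
        ge_of_tendsto ((hcont.tendsto lam).mono_left nhdsWithin_le_nhds)
          (eventually_nhdsWithin_of_forall (s := Ioi lam) hΛ)
    _ < b ^ p * lam := mul_lt_of_lt_one_left (by positivity) (by exact_mod_cast hκ)
    _ = lam * b ^ p := mul_comm _ _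

lemma div_rpow_le_volume_div_volume_rpow (hN : 1 ≤ N) (hp : 0 ≤ p) (ho : IsOpen Ω)
    (hb : Bornology.IsBounded Ω) (hne : Ω.Nonempty) (c : EuclideanSpace ℝ (Fin N)) {r : ℝ}
    (hr : 0 < r) :
    (r / (diam Ω / 2)) ^ p ≤
      ((volume (ball c r)).toReal / (volume Ω).toReal) ^ (p / N) := by
  have : Nonempty (Fin N) := Fin.pos_iff_nonempty.1 hN
  have hdiam : 0 < diam Ω := diam_pos_of_isOpen ho hb hne
  set R := diam Ω / 2
  have hR : 0 < R := half_pos hdiam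
  have hΩ : 0 < (volume Ω).toReal :=
    ENNReal.toReal_pos (ho.measure_pos volume hne).ne' hb.measure_lt_top.ne
  have hisodiam : (volume Ω).toReal ≤ (volume (closedBall c R)).toReal :=
    ENNReal.toReal_mono measure_closedBall_lt_top.ne (volume_le_volume_closedBall_diam_div_two hb c)
  have hball : (volume (ball c r)).toReal = (r / R) ^ N * (volume (closedBall c R)).toReal := by
    rw [← Measure.addHaar_closedBall_eq_addHaar_ball, ← measureReal_def, ← measureReal_def,
      Measure.addHaar_real_closedBall _ _ hr.le, Measure.addHaar_real_closedBall _ _ hR.le,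
      finrank_euclideanSpace_fin, div_pow]
    field_simp
  have hN0 : (N : ℝ) ≠ 0 := by exact_mod_cast (Nat.one_le_iff_ne_zero.1 hN)
  calc (r / R) ^ p = ((r / R) ^ N) ^ (p / N) := by
        rw [← rpow_natCast, ← rpow_mul (by positivity), mul_div_cancel₀ _ hN0]
    _ ≤ ((volume (ball c r)).toReal / (volume Ω).toReal) ^ (p / N) := by
        gcongr
        rw [hball, le_div_iff₀ hΩ]
        gcongr

end Comparison

/-- Corollary 3.2. For every open bounded convex set `Ω ⊂ ℝ^N` and
every open ball `B ⊂ ℝ^N`, `μ_p(Ω) < λ_p(B) · (|B|/|Ω|)^(p/N)`. -/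
theorem muP_lt_lambdaP_ball_volume {N : ℕ} (hN : 2 ≤ N) (p : ℝ) (hp : 1 < p)
    (Ω : Set (EuclideanSpace ℝ (Fin N))) (hΩo : IsOpen Ω)
    (hΩb : Bornology.IsBounded Ω) (hΩc : Convex ℝ Ω) (hΩne : Ω.Nonempty)
    (c : EuclideanSpace ℝ (Fin N)) (r : ℝ) (hr : 0 < r) :
    muPQ p p Ω < lambdaPQ p p (ball c r) *
      ((volume (ball c r)).toReal / (volume Ω).toReal) ^ (p / N) := by
  calc muPQ p p Ω < lambdaPQ p p (ball c r) * (r / (diam Ω / 2)) ^ p :=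
        muPQ_lt_lambdaPQ_ball_mul_div_diam hN hp hΩo hΩb hΩc hΩne c hr
    _ ≤ lambdaPQ p p (ball c r) *
          ((volume (ball c r)).toReal / (volume Ω).toReal) ^ (p / N) :=
        mul_le_mul_of_nonneg_left
          (div_rpow_le_volume_div_volume_rpow (by omega) (by linarith) hΩo hΩb hΩne c hr)
          (lambdaPQ_nonneg p p _)
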